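/- arXiv:2006.07670 — 2 statements merged into one kernel-verified Lean document; each statement's English description precedes it below -/
import Mathlib

section
/- Pathwise uniqueness holds for the labeled nonlinear system: if θ and θ' are both solutions of the nonlinear system for the labeled graphon W with the same initial datum θ₀ and the same driving processes B, then for almost every x ∈ I, P-almost surely θ^x_t = θ'^x_t for all t ∈ [0,T]. -/
open MeasureTheory ProbabilityTheory Real Set Filter Topology

noncomputable section

/-- The one-dimensional torus `𝕋 = ℝ/(2πℤ)`. -/
abbrev Torus : Type := AddCircle (2 * Real.pi)

instance : Fact (0 < 2 * Real.pi) := ⟨by positivity⟩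

/-- The label space `I = [0,1]`. -/
abbrev I01 : Set ℝ := Set.Icc (0:ℝ) 1

/-- The law at time `s` of the process `θ` under `P`. -/
def pathLaw {Ω : Type*} [MeasurableSpace Ω] (P : Measure Ω) (θ : Ω → ℝ → Torus) (s : ℝ) :
    Measure Torus := P.map (fun ω => θ ω s)

/-- The integrated drift
`∫₀ᵗ F(p_s) ds + ∫₀ᵗ ∫_I W(x,y) ( ∫_𝕋 Γ(p_s, u) μ^y_s(du) ) dy ds`. -/
def drift (F : Torus → ℝ) (Γ : Torus → Torus → ℝ) (W : ℝ → ℝ → ℝ)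
    (μ : ℝ → ℝ → Measure Torus) (x : ℝ) (p : ℝ → Torus) (t : ℝ) : ℝ :=
  (∫ s in Set.Icc 0 t, F (p s)) +
  ∫ s in Set.Icc 0 t, ∫ y in I01, W x y * ∫ u, Γ (p s) u ∂(μ y s)

/-- `θ : I × Ω → C([0,T],𝕋)` (jointly measurable, continuous in time) is a solution of the
labeled nonlinear system for the labeled graphon `W` with initial datum `θ0` and driving
processes `B`: writing `μ^y_s` for the law of `θ^y_s`, for a.e. `x ∈ I`, `P`-a.s., for all
`t ∈ [0,T]`,
`θ^x_t = θ^x_0 + π( ∫₀ᵗ F(θ^x_s) ds + ∫₀ᵗ ∫_I W(x,y) (∫_𝕋 Γ(θ^x_s,u) μ^y_s(du)) dy ds + B^x_t )`. -/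
structure IsLabeledSolution {Ω : Type*} [MeasurableSpace Ω] (T : ℝ) (P : Measure Ω)
    (F : Torus → ℝ) (Γ : Torus → Torus → ℝ) (W : ℝ → ℝ → ℝ)
    (θ0 : ℝ → Ω → Torus) (B : ℝ → Ω → ℝ → ℝ) (θ : ℝ → Ω → ℝ → Torus) : Prop where
  jointMeas : Measurable (fun p : ℝ × Ω => θ p.1 p.2)
  cont : ∀ x ω, ContinuousOn (θ x ω) (Set.Icc 0 T)
  sde : ∀ᵐ x ∂(volume.restrict I01), ∀ᵐ ω ∂P, ∀ t ∈ Set.Icc (0:ℝ) T,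
    θ x ω t = θ0 x ω +
      ((drift F Γ W (fun y s => pathLaw P (θ y) s) x (θ x ω) t + B x ω t : ℝ) : Torus)

/-- `F` is bounded and Lipschitz. -/
def BddLip (F : Torus → ℝ) : Prop :=
  (∃ K : NNReal, LipschitzWith K F) ∧ ∃ M : ℝ, ∀ a, |F a| ≤ M

/-- `Γ` is bounded and Lipschitz (jointly on `𝕋 × 𝕋`). -/
def BddLip2 (Γ : Torus → Torus → ℝ) : Prop :=
  (∃ K : NNReal, LipschitzWith K (fun p : Torus × Torus => Γ p.1 p.2)) ∧
    ∃ M : ℝ, ∀ a b, |Γ a b| ≤ M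

/-- A labeled graphon: a symmetric measurable function `I² → [0,1]`. -/
def IsGraphon (W : ℝ → ℝ → ℝ) : Prop :=
  Measurable (fun p : ℝ × ℝ => W p.1 p.2) ∧ (∀ x y, W x y ∈ Set.Icc (0:ℝ) 1) ∧
    ∀ x y, W x y = W y x

/-!
Regard the pairs `q = (x, ω)` as particles distributed according to `volume.restrict I01` times
`P`. By Fubini, averaging over the labels and over the laws is a single integral over particles, so
the labeled system is a deterministic mean-field system whose interaction weight is `W`. Its
velocity field is Lipschitz in the configuration for the mean distance `∫ dist (X q) (Y q)`. The
initial datum and the driving process cancel in the difference of two solutions, and the projection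
of `ℝ` onto the torus does not increase distances. Hence the mean distance at time `t` is at most a
constant times its integral over `[0, t]`, and it vanishes by Grönwall's inequality. This gives
equality almost surely at each fixed time, hence at all times simultaneously by continuity of the
paths.
-/

section Gronwall

lemma eqOn_zero_of_le_mul_setIntegral {f : ℝ → ℝ} {a b C : ℝ}
    (hf : ContinuousOn f (Icc a b)) (hf_nonneg : ∀ t ∈ Icc a b, 0 ≤ f t)
    (hle : ∀ t ∈ Icc a b, f t ≤ C * ∫ s in Icc a t, f s) :
    EqOn f 0 (Icc a b) := by
  have primitive_eq {t : ℝ} (ht : t ∈ Icc a b) :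
      ∫ s in Icc a t, f s = ∫ s in a..t, f s := by
    rw [intervalIntegral.integral_of_le ht.1, integral_Icc_eq_integral_Ioc]
  have primitive_nonneg {t : ℝ} (ht : t ∈ Icc a b) : 0 ≤ ∫ s in a..t, f s :=
    intervalIntegral.integral_nonneg ht.1 fun s hs ↦ hf_nonneg s ⟨hs.1, hs.2.trans ht.2⟩
  have primitive_deriv : ∀ t ∈ Ico a b,
      HasDerivWithinAt (fun r ↦ ∫ s in a..r, f s) (f t) (Ici t) t := fun t ht ↦ by
    have hfi : IntervalIntegrable f volume a t :=
      (hf.mono (Icc_subset_Icc_right ht.2.le)).intervalIntegrable_of_Icc ht.1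
    have hIoc : Ioc t b ⊆ Icc a b := fun s hs ↦ ⟨ht.1.trans hs.1.le, hs.2⟩
    have hft : ContinuousWithinAt f (Ioi t) t :=
      ((hf t (Ico_subset_Icc_self ht)).mono hIoc).mono_of_mem_nhdsWithin
        (Ioc_mem_nhdsGT ht.2)
    refine intervalIntegral.integral_hasDerivWithinAt_right hfi
      (t := Ioi t) ?_ hft
    exact ⟨Ioc t b, Ioc_mem_nhdsGT ht.2,
      (hf.mono hIoc).aestronglyMeasurable measurableSet_Ioc⟩
  have primitive_zero := eq_zero_of_abs_deriv_le_mul_abs_self_of_eq_zero_right (K := C)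
    (f := fun t ↦ ∫ s in a..t, f s) (a := a) (b := b) ?_ primitive_deriv (by simp) ?_
  · intro t ht
    refine le_antisymm ?_ (hf_nonneg t ht)
    simpa [primitive_eq ht, primitive_zero t ht] using hle t ht
  · exact (intervalIntegral.continuousOn_primitive hf.integrableOn_Icc).congr fun t ht ↦
      intervalIntegral.integral_of_le ht.1
  · intro t ht
    have ht' := Ico_subset_Icc_self ht
    rw [norm_of_nonneg (hf_nonneg t ht'), norm_of_nonneg (primitive_nonneg ht'),
      ← primitive_eq ht']
    exact hle t ht'

end Gronwall

section RandomPaths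

variable {Q ι E : Type*} [MeasurableSpace Q] {ν : Measure Q}

lemma ae_eqOn_of_forall_ae_eq [TopologicalSpace ι] [TopologicalSpace.PseudoMetrizableSpace ι]
    [SecondCountableTopology ι] [TopologicalSpace E] [T2Space E] {S : Set ι} {X Y : Q → ι → E}
    (hX : ∀ q, ContinuousOn (X q) S) (hY : ∀ q, ContinuousOn (Y q) S)
    (h : ∀ s ∈ S, ∀ᵐ q ∂ν, X q s = Y q s) : ∀ᵐ q ∂ν, EqOn (X q) (Y q) S := by
  obtain ⟨D, hDS, hD_countable, hD_dense⟩ :=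
    (TopologicalSpace.IsSeparable.of_separableSpace S).exists_countable_dense_subset
  have hD : ∀ᵐ q ∂ν, EqOn (X q) (Y q) D :=
    (ae_ball_iff hD_countable).2 fun s hs ↦ h s (hDS hs)
  filter_upwards [hD] with q hq
  exact hq.of_subset_closure (hX q) (hY q) hDS hD_dense

lemma isFiniteMeasure_comap_subtype_coe [MeasurableSpace ι] {μ : Measure ι} {S : Set ι}
    (hS : MeasurableSet S) (hμS : μ S ≠ ⊤) : IsFiniteMeasure (μ.comap ((↑) : S → ι)) :=
  ⟨by simpa [comap_subtype_coe_apply hS] using hμS.lt_top⟩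

variable [TopologicalSpace ι] [TopologicalSpace.MetrizableSpace ι] [SecondCountableTopology ι]
  [MeasurableSpace ι] [OpensMeasurableSpace ι] {μ : Measure ι} {S : Set ι}

lemma stronglyMeasurable_uncurry_restrict_of_continuousOn [TopologicalSpace E]
    [TopologicalSpace.PseudoMetrizableSpace E] {g : Q → ι → E}
    (hg : ∀ s ∈ S, StronglyMeasurable (g · s)) (hg_cont : ∀ q, ContinuousOn (g q) S) :
    StronglyMeasurable (Function.uncurry fun q (s : S) ↦ g q s) :=
  (stronglyMeasurable_uncurry_of_continuous_of_stronglyMeasurable (u := fun (s : S) q ↦ g q s)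
    (fun q ↦ (hg_cont q).domRestrict) fun s ↦ hg s s.2).comp_measurable measurable_swap

variable [NormedAddCommGroup E] [NormedSpace ℝ E] {g : Q → ι → E}

lemma stronglyMeasurable_setIntegral_of_continuousOn (hS : MeasurableSet S) (hμS : μ S ≠ ⊤)
    (hg : ∀ s ∈ S, StronglyMeasurable (g · s)) (hg_cont : ∀ q, ContinuousOn (g q) S) :
    StronglyMeasurable fun q ↦ ∫ s in S, g q s ∂μ := by
  have := isFiniteMeasure_comap_subtype_coe hS hμS
  simp only [← integral_subtype_comap hS]
  exact (stronglyMeasurable_uncurry_restrict_of_continuousOn hg hg_cont).integral_prod_right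

lemma integral_norm_setIntegral_le [IsFiniteMeasure ν] (hS : MeasurableSet S) (hμS : μ S ≠ ⊤)
    (hg : ∀ s ∈ S, StronglyMeasurable (g · s)) (hg_cont : ∀ q, ContinuousOn (g q) S) {C : ℝ}
    (hgC : ∀ q, ∀ s ∈ S, ‖g q s‖ ≤ C) :
    ∫ q, ‖∫ s in S, g q s ∂μ‖ ∂ν ≤ ∫ s in S, ∫ q, ‖g q s‖ ∂ν ∂μ := by
  have := isFiniteMeasure_comap_subtype_coe hS hμS
  simp only [← integral_subtype_comap hS]
  have hint : Integrable (Function.uncurry fun q (s : S) ↦ g q s)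
      (ν.prod (μ.comap ((↑) : S → ι))) :=
    .of_bound (stronglyMeasurable_uncurry_restrict_of_continuousOn hg
      hg_cont).aestronglyMeasurable C (.of_forall fun p ↦ hgC p.1 p.2 p.2.2)
  calc ∫ q, ‖∫ s : S, g q s ∂μ.comap (↑)‖ ∂ν
      ≤ ∫ q, ∫ s : S, ‖g q s‖ ∂μ.comap (↑) ∂ν :=
        integral_mono hint.integral_prod_left.norm hint.norm.integral_prod_left
          fun _ ↦ norm_integral_le_integral_norm _
    _ = ∫ s : S, ∫ q, ‖g q s‖ ∂ν ∂μ.comap (↑) := integral_integral_swap hint.norm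

end RandomPaths

lemma exists_norm_le_of_lipschitzWith {E V : Type*} [PseudoMetricSpace E] [BoundedSpace E]
    [SeminormedAddCommGroup V] {f : E → V} {K : NNReal} (hf : LipschitzWith K f) :
    ∃ C, ∀ a, ‖f a‖ ≤ C := by
  obtain ⟨C, hC⟩ := (hf.isBounded_image (Bornology.IsBounded.all univ)).exists_norm_le
  exact ⟨C, fun a ↦ hC _ (mem_image_of_mem f (mem_univ a))⟩

section MeanField

variable {Q E V : Type*} [MeasurableSpace Q] [NormedAddCommGroup V] [NormedSpace ℝ V]
  {ν : Measure Q} {F : E → V} {Γ : E → E → V} {w : Q → Q → ℝ} {KF KΓ M : NNReal}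

/-- The velocity of the particle `q` in the mean-field system of configuration `Z : Q → E`, with
self-drift `F` and pairwise interaction `Γ` weighted by `w`. Particles form a measure space
`(Q, ν)`; for the labeled system a particle is a pair `(x, ω)` of a label and a sample point, so
that the integral against `ν` performs both the label average and the average over the law. -/
def meanFieldVelocity (ν : Measure Q) (F : E → V) (Γ : E → E → V) (w : Q → Q → ℝ) (Z : Q → E)
    (q : Q) : V :=
  F (Z q) + ∫ q', w q q' • Γ (Z q) (Z q') ∂ν

variable [PseudoMetricSpace E]

lemma stronglyMeasurable_meanFieldVelocity [SFinite ν] [MeasurableSpace E]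
    [OpensMeasurableSpace E] [SecondCountableTopology E] (hF : Continuous F)
    (hΓ : Continuous (Function.uncurry Γ)) (hw : Measurable (Function.uncurry w)) {Z : Q → E}
    (hZ : Measurable Z) : StronglyMeasurable (meanFieldVelocity ν F Γ w Z) := by
  have hΓZ : StronglyMeasurable fun p : Q × Q ↦ Γ (Z p.1) (Z p.2) :=
    hΓ.comp_stronglyMeasurable
      ((hZ.comp measurable_fst).prodMk (hZ.comp measurable_snd)).stronglyMeasurable
  exact (hF.comp_stronglyMeasurable hZ.stronglyMeasurable).add
    (hw.stronglyMeasurable.smul hΓZ).integral_prod_right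

variable [BoundedSpace E] [IsFiniteMeasure ν]

lemma exists_norm_smul_le_of_lipschitzWith (hΓ : LipschitzWith KΓ (Function.uncurry Γ)) :
    ∃ C, ∀ (r : ℝ) (a b : E), |r| ≤ M → ‖r • Γ a b‖ ≤ C := by
  obtain ⟨C, hC⟩ := exists_norm_le_of_lipschitzWith hΓ
  refine ⟨M * C, fun r a b hr ↦ ?_⟩
  rw [norm_smul]
  exact mul_le_mul hr (hC (a, b)) (norm_nonneg _) M.2

lemma exists_norm_meanFieldVelocity_le (hF : LipschitzWith KF F)
    (hΓ : LipschitzWith KΓ (Function.uncurry Γ)) (hw_le : ∀ q q', |w q q'| ≤ M) :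
    ∃ C, ∀ Z q, ‖meanFieldVelocity ν F Γ w Z q‖ ≤ C := by
  obtain ⟨CF, hCF⟩ := exists_norm_le_of_lipschitzWith hF
  obtain ⟨CΓ, hCΓ⟩ := exists_norm_smul_le_of_lipschitzWith (M := M) hΓ
  exact ⟨CF + CΓ * ν.real univ, fun Z q ↦ norm_add_le_of_le (hCF _)
    (norm_integral_le_of_norm_le_const (.of_forall fun q' ↦ hCΓ _ _ _ (hw_le q q')))⟩

variable [MeasurableSpace E] [OpensMeasurableSpace E] [SecondCountableTopology E]

lemma integrable_dist {f g : Q → E} (hf : Measurable f) (hg : Measurable g) :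
    Integrable (fun q ↦ dist (f q) (g q)) ν := by
  obtain ⟨C, hC⟩ := Metric.boundedSpace_iff.1 ‹BoundedSpace E›
  exact .of_bound (hf.dist hg).aestronglyMeasurable C
    (.of_forall fun q ↦ by simpa using hC (f q) (g q))

lemma continuousOn_integral_dist {ι : Type*} [TopologicalSpace ι] [FirstCountableTopology ι]
    {S : Set ι} {X Y : Q → ι → E}
    (hX : ∀ s ∈ S, Measurable (X · s)) (hX_cont : ∀ q, ContinuousOn (X q) S)
    (hY : ∀ s ∈ S, Measurable (Y · s)) (hY_cont : ∀ q, ContinuousOn (Y q) S) :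
    ContinuousOn (fun s ↦ ∫ q, dist (X q s) (Y q s) ∂ν) S := by
  obtain ⟨C, hC⟩ := Metric.boundedSpace_iff.1 ‹BoundedSpace E›
  exact continuousOn_of_dominated
    (fun s hs ↦ ((hX s hs).dist (hY s hs)).aestronglyMeasurable)
    (fun s _ ↦ .of_forall fun q ↦ by simpa using hC (X q s) (Y q s)) (integrable_const C)
    (.of_forall fun q ↦ continuous_dist.comp_continuousOn ((hX_cont q).prodMk (hY_cont q)))

section Interaction

variable {u : Q → ℝ} (hΓ : LipschitzWith KΓ (Function.uncurry Γ)) (hu : Measurable u)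
  (hu_le : ∀ q, |u q| ≤ M)
include hΓ hu hu_le

lemma integrable_smul_interaction {Z : Q → E} (hZ : Measurable Z) (a : E) :
    Integrable (fun q ↦ u q • Γ a (Z q)) ν := by
  obtain ⟨C, hC⟩ := exists_norm_smul_le_of_lipschitzWith (M := M) hΓ
  have hΓZ : StronglyMeasurable fun q ↦ Γ a (Z q) :=
    hΓ.continuous.comp_stronglyMeasurable (measurable_const.prodMk hZ).stronglyMeasurable
  exact .of_bound (hu.stronglyMeasurable.smul hΓZ).aestronglyMeasurable C
    (.of_forall fun q ↦ hC _ a (Z q) (hu_le q))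

lemma norm_integral_smul_interaction_sub_le {Z Z' : Q → E} (hZ : Measurable Z)
    (hZ' : Measurable Z') (a a' : E) :
    ‖(∫ q, u q • Γ a (Z q) ∂ν) - ∫ q, u q • Γ a' (Z' q) ∂ν‖ ≤
      M * KΓ * (ν.real univ * dist a a' + ∫ q, dist (Z q) (Z' q) ∂ν) := by
  have pointwise (q : Q) : ‖u q • Γ a (Z q) - u q • Γ a' (Z' q)‖ ≤
      M * KΓ * (dist a a' + dist (Z q) (Z' q)) :=
    calc ‖u q • Γ a (Z q) - u q • Γ a' (Z' q)‖
        = |u q| * dist (Γ a (Z q)) (Γ a' (Z' q)) := by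
          rw [← smul_sub, norm_smul, dist_eq_norm, norm_eq_abs]
      _ ≤ M * (KΓ * dist (a, Z q) (a', Z' q)) :=
          mul_le_mul (hu_le q) (hΓ.dist_le_mul (a, Z q) (a', Z' q)) dist_nonneg M.2
      _ ≤ M * (KΓ * (dist a a' + dist (Z q) (Z' q))) := by
          gcongr
          exact max_le_add_of_nonneg dist_nonneg dist_nonneg
      _ = M * KΓ * (dist a a' + dist (Z q) (Z' q)) := (mul_assoc _ _ _).symm
  have hdist := integrable_dist (ν := ν) hZ hZ'
  calc ‖(∫ q, u q • Γ a (Z q) ∂ν) - ∫ q, u q • Γ a' (Z' q) ∂ν‖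
      = ‖∫ q, (u q • Γ a (Z q) - u q • Γ a' (Z' q)) ∂ν‖ := by
        rw [integral_sub (integrable_smul_interaction hΓ hu hu_le hZ a)
          (integrable_smul_interaction hΓ hu hu_le hZ' a')]
    _ ≤ ∫ q, M * KΓ * (dist a a' + dist (Z q) (Z' q)) ∂ν :=
        norm_integral_le_of_norm_le (((integrable_const _).add hdist).const_mul _)
          (.of_forall pointwise)
    _ = M * KΓ * (ν.real univ * dist a a' + ∫ q, dist (Z q) (Z' q) ∂ν) := by
        rw [integral_const_mul, integral_add (integrable_const _) hdist, integral_const,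
          smul_eq_mul]

lemma continuousOn_integral_smul_interaction {ι : Type*} [TopologicalSpace ι]
    [FirstCountableTopology ι] {S : Set ι} {p : ι → E} (hp : ContinuousOn p S) {X : Q → ι → E}
    (hX : ∀ s ∈ S, Measurable (X · s)) (hX_cont : ∀ q, ContinuousOn (X q) S) :
    ContinuousOn (fun s ↦ ∫ q, u q • Γ (p s) (X q s) ∂ν) S := by
  obtain ⟨C, hC⟩ := exists_norm_smul_le_of_lipschitzWith (M := M) hΓ
  exact continuousOn_of_dominated
    (fun s hs ↦ (integrable_smul_interaction hΓ hu hu_le (hX s hs) _).aestronglyMeasurable)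
    (fun s _ ↦ .of_forall fun q ↦ hC _ (p s) (X q s) (hu_le q)) (integrable_const C)
    (.of_forall fun q ↦ (hΓ.continuous.comp_continuousOn (hp.prodMk (hX_cont q))).const_smul
      (u q))

end Interaction

section Velocity

variable (hF : LipschitzWith KF F) (hΓ : LipschitzWith KΓ (Function.uncurry Γ))
  (hw : Measurable (Function.uncurry w)) (hw_le : ∀ q q', |w q q'| ≤ M)
include hF hΓ hw hw_le

lemma continuousOn_meanFieldVelocity {ι : Type*} [TopologicalSpace ι]
    [FirstCountableTopology ι] {S : Set ι} {X : Q → ι → E}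
    (hX : ∀ s ∈ S, Measurable (X · s)) (hX_cont : ∀ q, ContinuousOn (X q) S) (q : Q) :
    ContinuousOn (fun s ↦ meanFieldVelocity ν F Γ w (X · s) q) S :=
  (hF.continuous.comp_continuousOn (hX_cont q)).add
    (continuousOn_integral_smul_interaction hΓ (hw.comp measurable_prodMk_left) (hw_le q)
      (hX_cont q) hX hX_cont)

lemma norm_meanFieldVelocity_sub_le {Z Z' : Q → E} (hZ : Measurable Z) (hZ' : Measurable Z')
    (q : Q) :
    ‖meanFieldVelocity ν F Γ w Z q - meanFieldVelocity ν F Γ w Z' q‖ ≤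
      (KF + M * KΓ * ν.real univ) * dist (Z q) (Z' q) +
        M * KΓ * ∫ q', dist (Z q') (Z' q') ∂ν := by
  unfold meanFieldVelocity
  calc _ ≤ ‖F (Z q) - F (Z' q)‖ +
        ‖(∫ q', w q q' • Γ (Z q) (Z q') ∂ν) - ∫ q', w q q' • Γ (Z' q) (Z' q') ∂ν‖ := by
        rw [add_sub_add_comm]
        exact norm_add_le _ _
    _ ≤ KF * dist (Z q) (Z' q) +
        M * KΓ * (ν.real univ * dist (Z q) (Z' q) + ∫ q', dist (Z q') (Z' q') ∂ν) :=
        add_le_add ((dist_eq_norm _ _).symm.trans_le (hF.dist_le_mul _ _))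
          (norm_integral_smul_interaction_sub_le hΓ (hw.comp measurable_prodMk_left) (hw_le q)
            hZ hZ' _ _)
    _ = _ := by ring

lemma integral_norm_meanFieldVelocity_sub_le {Z Z' : Q → E} (hZ : Measurable Z)
    (hZ' : Measurable Z') :
    ∫ q, ‖meanFieldVelocity ν F Γ w Z q - meanFieldVelocity ν F Γ w Z' q‖ ∂ν ≤
      (KF + 2 * (M * KΓ * ν.real univ)) * ∫ q, dist (Z q) (Z' q) ∂ν := by
  have hdist := (integrable_dist (ν := ν) hZ hZ').const_mul (KF + M * KΓ * ν.real univ)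
  calc _ ≤ ∫ q, ((KF + M * KΓ * ν.real univ) * dist (Z q) (Z' q) +
        M * KΓ * ∫ q', dist (Z q') (Z' q') ∂ν) ∂ν :=
        integral_mono_of_nonneg (.of_forall fun _ ↦ norm_nonneg _)
          (hdist.add (integrable_const _))
          (.of_forall (norm_meanFieldVelocity_sub_le hF hΓ hw hw_le hZ hZ'))
    _ = _ := by
        rw [integral_add hdist (integrable_const _), integral_const_mul, integral_const,
          smul_eq_mul]
        ring

variable {X Y : Q → ℝ → E} {a b : ℝ}
  (hX : ∀ t ∈ Icc a b, Measurable (X · t)) (hX_cont : ∀ q, ContinuousOn (X q) (Icc a b))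
  (hY : ∀ t ∈ Icc a b, Measurable (Y · t)) (hY_cont : ∀ q, ContinuousOn (Y q) (Icc a b))
include hX hX_cont

lemma integrableOn_meanFieldVelocity {t : ℝ} (htb : t ≤ b) (q : Q) :
    IntegrableOn (fun s ↦ meanFieldVelocity ν F Γ w (X · s) q) (Icc a t) :=
  ((continuousOn_meanFieldVelocity hF hΓ hw hw_le hX hX_cont q).mono
    (Icc_subset_Icc_right htb)).integrableOn_Icc

lemma stronglyMeasurable_setIntegral_meanFieldVelocity {t : ℝ} (htb : t ≤ b) :
    StronglyMeasurable fun q ↦ ∫ s in Icc a t, meanFieldVelocity ν F Γ w (X · s) q :=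
  have hsub : Icc a t ⊆ Icc a b := Icc_subset_Icc_right htb
  stronglyMeasurable_setIntegral_of_continuousOn measurableSet_Icc measure_Icc_lt_top.ne
    (fun s hs ↦ stronglyMeasurable_meanFieldVelocity hF.continuous hΓ.continuous hw
      (hX s (hsub hs)))
    fun q ↦ (continuousOn_meanFieldVelocity hF hΓ hw hw_le hX hX_cont q).mono hsub

lemma integrable_setIntegral_meanFieldVelocity {t : ℝ} (htb : t ≤ b) :
    Integrable (fun q ↦ ∫ s in Icc a t, meanFieldVelocity ν F Γ w (X · s) q) ν := by
  obtain ⟨C, hC⟩ := exists_norm_meanFieldVelocity_le (ν := ν) hF hΓ hw_le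
  exact .of_bound (stronglyMeasurable_setIntegral_meanFieldVelocity hF hΓ hw hw_le hX hX_cont
    htb).aestronglyMeasurable _ (.of_forall fun q ↦
      norm_setIntegral_le_of_norm_le_const measure_Icc_lt_top fun s _ ↦ hC (X · s) q)

include hY hY_cont

lemma integral_norm_setIntegral_meanFieldVelocity_sub_le {t : ℝ} (htb : t ≤ b) :
    ∫ q, ‖(∫ s in Icc a t, meanFieldVelocity ν F Γ w (X · s) q) -
        ∫ s in Icc a t, meanFieldVelocity ν F Γ w (Y · s) q‖ ∂ν ≤
      (KF + 2 * (M * KΓ * ν.real univ)) * ∫ s in Icc a t, ∫ q, dist (X q s) (Y q s) ∂ν := by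
  have hsub : Icc a t ⊆ Icc a b := Icc_subset_Icc_right htb
  obtain ⟨C, hC⟩ := exists_norm_meanFieldVelocity_le (ν := ν) hF hΓ hw_le
  calc _ = ∫ q, ‖∫ s in Icc a t,
        (meanFieldVelocity ν F Γ w (X · s) q - meanFieldVelocity ν F Γ w (Y · s) q)‖ ∂ν := by
        congr with q
        rw [integral_sub (integrableOn_meanFieldVelocity hF hΓ hw hw_le hX hX_cont htb q)
          (integrableOn_meanFieldVelocity hF hΓ hw hw_le hY hY_cont htb q)]
    _ ≤ ∫ s in Icc a t, ∫ q, ‖meanFieldVelocity ν F Γ w (X · s) q -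
        meanFieldVelocity ν F Γ w (Y · s) q‖ ∂ν := by
        refine integral_norm_setIntegral_le measurableSet_Icc measure_Icc_lt_top.ne
          (fun s hs ↦ ?_) (fun q ↦ ?_) fun q s _ ↦ norm_sub_le_of_le (hC _ q) (hC _ q)
        · have hV {Z : Q → E} (hZ : Measurable Z) :=
            stronglyMeasurable_meanFieldVelocity (ν := ν) hF.continuous hΓ.continuous hw hZ
          exact (hV (hX s (hsub hs))).sub (hV (hY s (hsub hs)))
        · exact ((continuousOn_meanFieldVelocity hF hΓ hw hw_le hX hX_cont q).sub
            (continuousOn_meanFieldVelocity hF hΓ hw hw_le hY hY_cont q)).mono hsub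
    _ ≤ ∫ s in Icc a t,
        (KF + 2 * (M * KΓ * ν.real univ)) * ∫ q, dist (X q s) (Y q s) ∂ν := by
        refine integral_mono_of_nonneg
          (.of_forall fun s ↦ integral_nonneg fun q ↦ norm_nonneg _) ?_
          ((ae_restrict_iff' measurableSet_Icc).2 (.of_forall fun s hs ↦
            integral_norm_meanFieldVelocity_sub_le hF hΓ hw hw_le (hX s (hsub hs))
              (hY s (hsub hs))))
        exact ((continuousOn_integral_dist hX hX_cont hY hY_cont).mono
          hsub).integrableOn_Icc.const_mul _
    _ = _ := integral_const_mul _ _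

theorem integral_dist_eq_zero_of_dist_le
    (hXY : ∀ t ∈ Icc a b, ∀ᵐ q ∂ν, dist (X q t) (Y q t) ≤
      ‖(∫ s in Icc a t, meanFieldVelocity ν F Γ w (X · s) q) -
        ∫ s in Icc a t, meanFieldVelocity ν F Γ w (Y · s) q‖) :
    ∀ t ∈ Icc a b, ∫ q, dist (X q t) (Y q t) ∂ν = 0 := by
  refine eqOn_zero_of_le_mul_setIntegral (C := KF + 2 * (M * KΓ * ν.real univ))
    (continuousOn_integral_dist hX hX_cont hY hY_cont)
    (fun t _ ↦ integral_nonneg fun q ↦ dist_nonneg) fun t ht ↦ ?_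
  exact (integral_mono_of_nonneg (.of_forall fun q ↦ dist_nonneg)
    ((integrable_setIntegral_meanFieldVelocity hF hΓ hw hw_le hX hX_cont ht.2).sub
      (integrable_setIntegral_meanFieldVelocity hF hΓ hw hw_le hY hY_cont ht.2)).norm
    (hXY t ht)).trans
    (integral_norm_setIntegral_meanFieldVelocity_sub_le hF hΓ hw hw_le hX hX_cont hY hY_cont ht.2)

end Velocity

theorem ae_eqOn_of_dist_le_norm_sub {E : Type*} [MetricSpace E] [BoundedSpace E]
    [MeasurableSpace E] [OpensMeasurableSpace E] [SecondCountableTopology E] {F : E → V}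
    {Γ : E → E → V} {X Y : Q → ℝ → E} {a b : ℝ}
    (hF : LipschitzWith KF F) (hΓ : LipschitzWith KΓ (Function.uncurry Γ))
    (hw : Measurable (Function.uncurry w)) (hw_le : ∀ q q', |w q q'| ≤ M)
    (hX : ∀ t ∈ Icc a b, Measurable (X · t)) (hX_cont : ∀ q, ContinuousOn (X q) (Icc a b))
    (hY : ∀ t ∈ Icc a b, Measurable (Y · t)) (hY_cont : ∀ q, ContinuousOn (Y q) (Icc a b))
    (hXY : ∀ t ∈ Icc a b, ∀ᵐ q ∂ν, dist (X q t) (Y q t) ≤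
      ‖(∫ s in Icc a t, meanFieldVelocity ν F Γ w (X · s) q) -
        ∫ s in Icc a t, meanFieldVelocity ν F Γ w (Y · s) q‖) :
    ∀ᵐ q ∂ν, EqOn (X q) (Y q) (Icc a b) := by
  refine ae_eqOn_of_forall_ae_eq hX_cont hY_cont fun t ht ↦ ?_
  have hdist := (integral_eq_zero_iff_of_nonneg (fun q ↦ dist_nonneg)
    (integrable_dist (hX t ht) (hY t ht))).1
    (integral_dist_eq_zero_of_dist_le hF hΓ hw hw_le hX hX_cont hY hY_cont hXY t ht)
  exact hdist.mono fun q hq ↦ dist_eq_zero.1 hq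

end MeanField

section LabeledSystem

lemma dist_coe_addCircle_le (p r r' : ℝ) : dist (r : AddCircle p) r' ≤ ‖r - r'‖ := by
  rw [dist_eq_norm, ← AddCircle.coe_sub]
  exact QuotientAddGroup.norm_mk_le_norm

variable {Ω : Type*} [MeasurableSpace Ω] {P : Measure Ω} {F : Torus → ℝ}
  {Γ : Torus → Torus → ℝ} {W : ℝ → ℝ → ℝ} {KF KΓ M : NNReal}
  {T : ℝ} {θ0 : ℝ → Ω → Torus} {B : ℝ → Ω → ℝ → ℝ} {θ θ' : ℝ → Ω → ℝ → Torus}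

lemma IsLabeledSolution.measurable_eval (hθ : IsLabeledSolution T P F Γ W θ0 B θ) (t : ℝ) :
    Measurable fun q : ℝ × Ω ↦ θ q.1 q.2 t :=
  (measurable_pi_apply t).comp hθ.jointMeas

/-- The law of a particle `(x, ω)` of the labeled system: a uniform label and a sample point. -/
abbrev particleMeasure (P : Measure Ω) : Measure (ℝ × Ω) := (volume.restrict I01).prod P

/-- The interaction weight of two particles of the labeled system, which only depends on their
labels. -/
abbrev labelWeight (W : ℝ → ℝ → ℝ) (q q' : ℝ × Ω) : ℝ := W q.1 q'.1

lemma measurable_uncurry_labelWeight (hW : Measurable (Function.uncurry W)) :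
    Measurable (Function.uncurry (labelWeight (Ω := Ω) W)) :=
  hW.comp (f := fun p : (ℝ × Ω) × ℝ × Ω ↦ (p.1.1, p.2.1))
    (measurable_fst.fst.prodMk measurable_snd.fst)

/-- The velocity of the particles of the labeled system in configuration `Z`. -/
abbrev labeledVelocity (P : Measure Ω) (F : Torus → ℝ) (Γ : Torus → Torus → ℝ) (W : ℝ → ℝ → ℝ)
    (Z : ℝ × Ω → Torus) : ℝ × Ω → ℝ :=
  meanFieldVelocity (particleMeasure P) F Γ (labelWeight W) Z

variable [IsFiniteMeasure P]

lemma setIntegral_mul_integral_pathLaw (hΓ : LipschitzWith KΓ (Function.uncurry Γ))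
    (hW : Measurable (Function.uncurry W)) (hW_le : ∀ x y, |W x y| ≤ M)
    {s : ℝ} (hθ : Measurable fun q : ℝ × Ω ↦ θ q.1 q.2 s)
    (x : ℝ) (a : Torus) :
    ∫ y in I01, W x y * ∫ u, Γ a u ∂(pathLaw P (θ y) s) =
      ∫ q, W x q.1 • Γ a (θ q.1 q.2 s) ∂particleMeasure P := by
  have hΓa : Continuous (Γ a) := hΓ.continuous.comp (Continuous.prodMk_right a)
  have hWx : Measurable fun q : ℝ × Ω ↦ W x q.1 :=
    hW.comp (measurable_const.prodMk measurable_fst)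
  rw [integral_prod _ (integrable_smul_interaction hΓ hWx (fun q ↦ hW_le x q.1) hθ a)]
  congr with y
  have hθy : Measurable fun ω ↦ θ y ω s := hθ.comp measurable_prodMk_left
  rw [pathLaw, integral_map hθy.aemeasurable hΓa.aestronglyMeasurable]
  exact (integral_const_mul _ _).symm

namespace IsLabeledSolution

variable (hθ : IsLabeledSolution T P F Γ W θ0 B θ) (hF : LipschitzWith KF F)
  (hΓ : LipschitzWith KΓ (Function.uncurry Γ)) (hW : Measurable (Function.uncurry W))
  (hW_le : ∀ x y, |W x y| ≤ M)
include hθ hF hΓ hW hW_le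

lemma drift_eq_setIntegral_labeledVelocity {t : ℝ} (htT : t ≤ T) (q : ℝ × Ω) :
    drift F Γ W (fun y s ↦ pathLaw P (θ y) s) q.1 (θ q.1 q.2) t =
      ∫ s in Icc 0 t, labeledVelocity P F Γ W (fun q ↦ θ q.1 q.2 s) q := by
  have hsub : Icc 0 t ⊆ Icc 0 T := Icc_subset_Icc_right htT
  have hself := (hF.continuous.comp_continuousOn ((hθ.cont q.1 q.2).mono hsub)).integrableOn_Icc
    (μ := volume)
  have hinteraction := ((continuousOn_integral_smul_interaction (ν := particleMeasure P)
    (u := fun q' ↦ W q.1 q'.1) hΓ (hW.comp (measurable_const.prodMk measurable_fst))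
    (fun q' ↦ hW_le q.1 q'.1) (hθ.cont q.1 q.2) (fun s _ ↦ hθ.measurable_eval s)
    fun q' ↦ hθ.cont q'.1 q'.2).mono hsub).integrableOn_Icc (μ := volume)
  simp only [drift, setIntegral_mul_integral_pathLaw hΓ hW hW_le (hθ.measurable_eval _)]
  exact (integral_add hself hinteraction).symm

lemma ae_eq_add_setIntegral_labeledVelocity {t : ℝ} (ht : t ∈ Icc 0 T) :
    ∀ᵐ x ∂(volume.restrict I01), ∀ᵐ ω ∂P, θ x ω t = θ0 x ω +
      (((∫ s in Icc 0 t, labeledVelocity P F Γ W (fun q ↦ θ q.1 q.2 s) (x, ω)) + B x ω t : ℝ) :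
        Torus) := by
  filter_upwards [hθ.sde] with x hx
  filter_upwards [hx] with ω hω
  rw [hω t ht, hθ.drift_eq_setIntegral_labeledVelocity hF hΓ hW hW_le ht.2 (x, ω)]

lemma measurable_setIntegral_labeledVelocity {t : ℝ} (htT : t ≤ T) :
    Measurable fun q ↦ ∫ s in Icc 0 t, labeledVelocity P F Γ W (fun q ↦ θ q.1 q.2 s) q :=
  (stronglyMeasurable_setIntegral_meanFieldVelocity (X := fun q : ℝ × Ω ↦ θ q.1 q.2) hF hΓ
    (measurable_uncurry_labelWeight hW) (fun q q' ↦ hW_le q.1 q'.1)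
    (fun t _ ↦ hθ.measurable_eval t) (fun q ↦ hθ.cont q.1 q.2) htT).measurable

lemma ae_dist_le_norm_setIntegral_labeledVelocity_sub
    (hθ' : IsLabeledSolution T P F Γ W θ0 B θ') {t : ℝ} (ht : t ∈ Icc 0 T) :
    ∀ᵐ q ∂particleMeasure P, dist (θ q.1 q.2 t) (θ' q.1 q.2 t) ≤
      ‖(∫ s in Icc 0 t, labeledVelocity P F Γ W (fun q ↦ θ q.1 q.2 s) q) -
        ∫ s in Icc 0 t, labeledVelocity P F Γ W (fun q ↦ θ' q.1 q.2 s) q‖ := by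
  refine (Measure.ae_prod_iff_ae_ae (measurableSet_le
    ((hθ.measurable_eval t).dist (hθ'.measurable_eval t))
    ((hθ.measurable_setIntegral_labeledVelocity hF hΓ hW hW_le ht.2).sub
      (hθ'.measurable_setIntegral_labeledVelocity hF hΓ hW hW_le ht.2)).norm)).2 ?_
  filter_upwards [hθ.ae_eq_add_setIntegral_labeledVelocity hF hΓ hW hW_le ht,
    hθ'.ae_eq_add_setIntegral_labeledVelocity hF hΓ hW hW_le ht] with x hx hx'
  filter_upwards [hx, hx'] with ω hω hω'
  rw [hω, hω', dist_add_left]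
  simpa only [add_sub_add_right_eq_sub, Pi.sub_apply] using
    dist_coe_addCircle_le _ (_ + B x ω t) (_ + B x ω t)

end IsLabeledSolution

theorem labeled_nonlinear_system_pathwise_uniqueness_general
    (hF : LipschitzWith KF F) (hΓ : LipschitzWith KΓ (Function.uncurry Γ))
    (hW : Measurable (Function.uncurry W)) (hW_le : ∀ x y, |W x y| ≤ M)
    (hθ : IsLabeledSolution T P F Γ W θ0 B θ) (hθ' : IsLabeledSolution T P F Γ W θ0 B θ') :
    ∀ᵐ x ∂(volume.restrict I01), ∀ᵐ ω ∂P, ∀ t ∈ Icc (0 : ℝ) T, θ x ω t = θ' x ω t :=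
  Measure.ae_ae_of_ae_prod <|
    ae_eqOn_of_dist_le_norm_sub (X := fun q : ℝ × Ω ↦ θ q.1 q.2)
      (Y := fun q : ℝ × Ω ↦ θ' q.1 q.2) hF hΓ
      (measurable_uncurry_labelWeight hW) (fun q q' ↦ hW_le q.1 q'.1)
      (fun t _ ↦ hθ.measurable_eval t) (fun q ↦ hθ.cont q.1 q.2)
      (fun t _ ↦ hθ'.measurable_eval t) (fun q ↦ hθ'.cont q.1 q.2)
      fun _ ht ↦ hθ.ae_dist_le_norm_setIntegral_labeledVelocity_sub hF hΓ hW hW_le hθ' ht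

end LabeledSystem

/-- pathwise uniqueness for the labeled nonlinear system: if `θ` and `θ'`
are both solutions of the nonlinear system for the labeled graphon `W` with the same initial
datum `θ0` and the same driving processes `B`, then for almost every `x ∈ I`, `P`-almost
surely, `θ^x_t = θ'^x_t` for all `t ∈ [0,T]`. -/
theorem labeled_nonlinear_system_pathwise_uniqueness
    {Ω : Type*} [MeasurableSpace Ω] (T : ℝ) (hT : 0 < T)
    (P : Measure Ω) [IsProbabilityMeasure P]
    (F : Torus → ℝ) (Γ : Torus → Torus → ℝ) (hF : BddLip F) (hΓ : BddLip2 Γ)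
    (W : ℝ → ℝ → ℝ) (hW : IsGraphon W)
    (θ0 : ℝ → Ω → Torus) (hθ0 : Measurable (fun p : ℝ × Ω => θ0 p.1 p.2))
    (B : ℝ → Ω → ℝ → ℝ) (hBmeas : Measurable (fun p : ℝ × Ω => B p.1 p.2))
    (hB0 : ∀ x ω, B x ω 0 = 0)
    (θ θ' : ℝ → Ω → ℝ → Torus)
    (hθ : IsLabeledSolution T P F Γ W θ0 B θ)
    (hθ' : IsLabeledSolution T P F Γ W θ0 B θ') :
    ∀ᵐ x ∂(volume.restrict I01), ∀ᵐ ω ∂P, ∀ t ∈ Set.Icc (0:ℝ) T, θ x ω t = θ' x ω t := by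
  obtain ⟨⟨KF, hF⟩, -⟩ := hF
  obtain ⟨⟨KΓ, hΓ⟩, -⟩ := hΓ
  exact labeled_nonlinear_system_pathwise_uniqueness_general (M := 1) hF hΓ hW.1
    (fun x y ↦ by simpa [abs_of_nonneg (hW.2.1 x y).1] using (hW.2.1 x y).2) hθ hθ'
end
end

section
/- Suppose θ is a solution of the nonlinear system for the labeled graphon W with initial datum θ₀ and driving processes B, where for almost every x ∈ I the process B^x is a standard Brownian motion independent of θ^x_0. Then for almost every x ∈ I the marginal laws μ^x_t = Law(θ^x_t) solve the labeled nonlinear Fokker–Planck equation weakly: for every twice continuously differentiable f : 𝕋 → ℝ and every t ∈ [0,T], ∫_𝕋 f dμ^x_t − ∫_𝕋 f dμ^x_0 = ∫₀ᵗ ∫_𝕋 ( ½ f''(θ) + f'(θ) [ F(θ) + ∫_I W(x,y) ∫_𝕋 Γ(θ,u) μ^y_s(du) dy ] ) μ^x_s(dθ) ds. -/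
open MeasureTheory ProbabilityTheory Real Set Filter Topology

noncomputable section

/-- A standard Brownian motion on `[0,T]`: a continuous real-valued process starting at `0`
whose increment `B_t − B_s` is Gaussian of mean `0` and variance `t − s` and is independent
of the past `(B_r)_{r ≤ s}`. -/
def IsStandardBM {Ω : Type*} [MeasurableSpace Ω] (T : ℝ) (P : Measure Ω)
    (B : Ω → ℝ → ℝ) : Prop :=
  (∀ ω, B ω 0 = 0) ∧ (∀ ω, ContinuousOn (B ω) (Set.Icc 0 T)) ∧
  (∀ s : ℝ, Measurable (fun ω => B ω s)) ∧
  (∀ s t : ℝ, 0 ≤ s → s ≤ t → t ≤ T →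
    P.map (fun ω => B ω t - B ω s) = ProbabilityTheory.gaussianReal 0 (Real.toNNReal (t - s)) ∧
    ProbabilityTheory.IndepFun (fun ω => B ω t - B ω s)
      (fun ω => (fun r : Set.Icc (0:ℝ) s => B ω r)) P)

/-!
Once the laws `μ^y_s` are regarded as given, a single label sees an equation `dX = b(s, X) ds + dB`
with additive noise and a Lipschitz drift, so Itô's formula can be avoided. The solution at time `t`
is a limit of Picard iterates built from the initial value and the noise up to `t`; hence it is
independent of `B_s - B_t` for `s ≥ t`. Splitting `f(X_s) - f(X_t)` into the kick by `B_s - B_t` and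
the subsequent drift displacement, the kick contributes `½ f''` by Taylor expansion against a
centred Gaussian of variance `s - t`, and the displacement contributes `f' b` because `f` is
strictly differentiable. This computes the right derivative of `𝔼 f(X_t)`, and the weak equation
follows by integration.
-/

section CompactRange

variable {Ω E : Type*} [MeasurableSpace Ω] {P : Measure Ω} [TopologicalSpace E] [CompactSpace E]

lemma exists_norm_le_of_continuous {V : Type*} [SeminormedAddCommGroup V] {f : E → V}
    (hf : Continuous f) : ∃ C : NNReal, ∀ u, ‖f u‖ ≤ C :=
  ⟨‖(⟨f, hf⟩ : C(E, V))‖₊, fun u => (⟨f, hf⟩ : C(E, V)).norm_coe_le_norm u⟩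

lemma exists_norm_le_of_continuous_uncurry {V : Type*} [SeminormedAddCommGroup V] {g : ℝ → E → V}
    (hg : Continuous (Function.uncurry g)) (a c : ℝ) :
    ∃ C : NNReal, ∀ s ∈ Icc a c, ∀ u, ‖g s u‖ ≤ C := by
  obtain ⟨C, hC⟩ := (isCompact_Icc.prod isCompact_univ).exists_bound_of_continuousOn
    (f := Function.uncurry g) (s := Icc a c ×ˢ univ) hg.continuousOn
  exact ⟨C.toNNReal, fun s hs u => (hC (s, u) ⟨hs, mem_univ u⟩).trans (Real.le_coe_toNNReal C)⟩

variable [MeasurableSpace E] [OpensMeasurableSpace E] [IsFiniteMeasure P]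

lemma integrable_comp_of_continuous {g : E → ℝ} (hg : Continuous g) {Y : Ω → E}
    (hY : Measurable Y) : Integrable (fun ω => g (Y ω)) P := by
  obtain ⟨C, hC⟩ := exists_norm_le_of_continuous hg
  exact Integrable.of_bound (hg.measurable.comp hY).aestronglyMeasurable C
    (ae_of_all _ fun ω => hC (Y ω))

lemma continuous_integral_comp_path {g : ℝ → E → ℝ} (hg : Continuous (Function.uncurry g))
    {X : Ω → ℝ → E} (hX : ∀ ω, Continuous (X ω)) (hXm : ∀ s, Measurable fun ω => X ω s) :
    Continuous fun s => ∫ ω, g s (X ω s) ∂P := by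
  refine continuous_iff_continuousAt.2 fun t => ?_
  obtain ⟨C, hC⟩ := exists_norm_le_of_continuous_uncurry hg (t - 1) (t + 1)
  refine continuousAt_of_dominated (bound := fun _ => C)
    (Eventually.of_forall fun s =>
      ((hg.uncurry_left s).measurable.comp (hXm s)).aestronglyMeasurable) ?_
    (integrable_const _)
    (ae_of_all _ fun ω => (hg.comp (continuous_id.prodMk (hX ω))).continuousAt)
  filter_upwards [Icc_mem_nhds (sub_one_lt t) (lt_add_one t)] with s hs
  exact ae_of_all _ fun ω => hC s hs _

end CompactRange

lemma tendsto_inv_mul_sub_of_hasStrictDerivAt {ι : Type*} {l : Filter ι} {g : ℝ → ℝ}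
    {g' x c : ℝ} {h A D : ι → ℝ} (hg : HasStrictDerivAt g g' x) (hD : Tendsto D l (𝓝 x))
    (hA : Tendsto A l (𝓝 0)) (hAh : Tendsto (fun i => (h i)⁻¹ * A i) l (𝓝 c)) :
    Tendsto (fun i => (h i)⁻¹ * (g (D i + A i) - g (D i))) l (𝓝 (g' * c)) := by
  have hpair : Tendsto (fun i => (D i + A i, D i)) l (𝓝 (x, x)) := by
    simpa using (hD.add hA).prodMk_nhds hD
  have hrem : (fun i => (h i)⁻¹ * (g (D i + A i) - g (D i) - A i * g')) =o[l]
      fun i => (h i)⁻¹ * A i := by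
    simpa [Function.comp_def] using
      (Asymptotics.isBigO_refl (fun i => (h i)⁻¹) l).mul_isLittleO (hg.isLittleO.comp_tendsto hpair)
  have hrem_zero := (hrem.trans_isBigO (hAh.isBigO_one ℝ)).tendsto_div_nhds_zero
  refine ((hrem_zero.add (hAh.const_mul g')).congr fun i => ?_).trans_eq (by rw [zero_add])
  ring

section Taylor

variable {g g' : ℝ → ℝ}

lemma isLittleO_taylor_two {c x : ℝ} (hg : ∀ᶠ y in 𝓝 x, HasDerivAt g (g' y) y)
    (hg' : HasDerivAt g' c x) :
    (fun y => g y - g x - g' x * (y - x) - c / 2 * (y - x) ^ 2) =o[𝓝 x] fun y => (y - x) ^ 2 := by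
  have hne : (fun y => g y - g x - g' x * (y - x) - c / 2 * (y - x) ^ 2) =o[𝓝[≠] x]
      fun y => (y - x) ^ 2 := by
    refine (Asymptotics.isLittleO_iff_tendsto' ?_).2 <| HasDerivAt.lhopital_zero_nhdsNE
      (f' := fun y => g' y - g' x - c * (y - x)) (g' := fun y => 2 * (y - x)) ?_ ?_ ?_ ?_ ?_ ?_
    · filter_upwards [self_mem_nhdsWithin] with y hy h
      exact absurd (pow_eq_zero_iff two_ne_zero |>.1 h) (sub_ne_zero.2 hy)
    · filter_upwards [hg.filter_mono nhdsWithin_le_nhds] with y hy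
      have hid := (hasDerivAt_id y).sub_const x
      exact ((((hy.sub_const (g x)).sub (hid.const_mul (g' x))).sub
        ((hid.pow 2).const_mul (c / 2))).congr_deriv (by simp; ring))
    · filter_upwards with y
      exact (((hasDerivAt_id y).sub_const x).pow 2).congr_deriv (by simp)
    · filter_upwards [self_mem_nhdsWithin] with y hy
      exact mul_ne_zero two_ne_zero (sub_ne_zero.2 hy)
    · have hcont : ContinuousAt (fun y => g y - g x - g' x * (y - x) - c / 2 * (y - x) ^ 2) x := by
        have := hg.self_of_nhds.continuousAt
        fun_prop
      simpa using hcont.tendsto.mono_left nhdsWithin_le_nhds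
    · have hcont : ContinuousAt (fun y => (y - x) ^ 2) x := by fun_prop
      simpa using hcont.tendsto.mono_left nhdsWithin_le_nhds
    · have hdiff := hg'.isLittleO.tendsto_div_nhds_zero.mono_left (nhdsWithin_le_nhds (s := {x}ᶜ))
      refine (zero_div (2 : ℝ) ▸ hdiff.div_const 2).congr fun y => ?_
      rw [smul_eq_mul, div_div, mul_comm (y - x) c, mul_comm (y - x) 2]
  simpa using hne.insert (by simp)

lemma abs_taylor_one_remainder_le {K : NNReal} (hg : ∀ y, HasDerivAt g (g' y) y)
    (hg' : LipschitzWith K g') (x z : ℝ) :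
    |g z - g x - g' x * (z - x)| ≤ K * (z - x) ^ 2 := by
  have hderiv : ∀ y ∈ uIcc x z,
      HasDerivWithinAt (fun y => g y - g' x * y) (g' y - g' x) (uIcc x z) y := fun y _ =>
    ((hg y).sub ((hasDerivAt_id y).const_mul (g' x))).hasDerivWithinAt.congr_deriv (by simp)
  have hbound : ∀ y ∈ uIcc x z, ‖g' y - g' x‖ ≤ K * |z - x| := fun y hy =>
    (hg'.norm_sub_le y x).trans
      (mul_le_mul_of_nonneg_left (abs_sub_left_of_mem_uIcc hy) K.coe_nonneg)
  have hmean := (convex_uIcc x z).norm_image_sub_le_of_norm_hasDerivWithin_le hderiv hbound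
    left_mem_uIcc right_mem_uIcc
  calc |g z - g x - g' x * (z - x)| = ‖g z - g' x * z - (g x - g' x * x)‖ := by
        rw [Real.norm_eq_abs]; congr 1; ring
    _ ≤ K * |z - x| * ‖z - x‖ := hmean
    _ = K * (z - x) ^ 2 := by rw [Real.norm_eq_abs, mul_assoc, ← sq, sq_abs]

lemma tendsto_inv_mul_taylor_one_remainder {c : ℝ} (hg : ∀ᶠ y in 𝓝 0, HasDerivAt g (g' y) y)
    (hg' : HasDerivAt g' c 0) (ζ : ℝ) :
    Tendsto (fun h : ℝ => h⁻¹ * (g (√h * ζ) - g 0 - g' 0 * (√h * ζ))) (𝓝[>] 0)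
      (𝓝 (c / 2 * ζ ^ 2)) := by
  have hz : Tendsto (fun h : ℝ => √h * ζ) (𝓝[>] 0) (𝓝 0) := by
    have : Continuous fun h : ℝ => √h * ζ := by fun_prop
    simpa using this.tendsto 0 |>.mono_left nhdsWithin_le_nhds
  have hlittle := (isLittleO_taylor_two hg hg').comp_tendsto hz
  have hlin : (fun h => (√h * ζ - 0) ^ 2) =O[𝓝[>] 0] fun h : ℝ => h :=
    Asymptotics.IsBigO.of_bound (ζ ^ 2) <| by
      filter_upwards [self_mem_nhdsWithin] with h (hh : 0 < h)
      simp [mul_pow, Real.sq_sqrt hh.le, mul_comm]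
  have hlim := (hlittle.trans_isBigO hlin).tendsto_div_nhds_zero.add_const (c / 2 * ζ ^ 2)
  rw [zero_add] at hlim
  refine hlim.congr' ?_
  filter_upwards [self_mem_nhdsWithin] with h (hh : 0 < h)
  simp only [Function.comp_apply, sub_zero, mul_pow, Real.sq_sqrt hh.le]
  field_simp
  ring

end Taylor

section Gaussian

variable {g g' : ℝ → ℝ} {K : NNReal}

lemma integral_sq_gaussianReal_zero (v : NNReal) : ∫ z, z ^ 2 ∂gaussianReal 0 v = v := by
  have h := variance_id_gaussianReal (μ := 0) (v := v)
  rwa [variance_of_integral_eq_zero aemeasurable_id (by simp [integral_id_gaussianReal])] at h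

lemma integrable_sq_gaussianReal (μ : ℝ) (v : NNReal) :
    Integrable (fun z => z ^ 2) (gaussianReal μ v) :=
  (memLp_id_gaussianReal 2).integrable_sq

lemma gaussianReal_zero_toNNReal_eq_map {h : ℝ} (hh : 0 ≤ h) :
    gaussianReal 0 h.toNNReal = (gaussianReal 0 1).map (√h * ·) := by
  rw [gaussianReal_map_const_mul, mul_zero, mul_one]
  congr 1
  ext
  simp [Real.coe_toNNReal _ hh, Real.sq_sqrt hh]

lemma integrable_taylor_one_remainder_gaussianReal (hg : ∀ y, HasDerivAt g (g' y) y)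
    (hg' : LipschitzWith K g') (v : NNReal) :
    Integrable (fun z => g z - g 0 - g' 0 * z) (gaussianReal 0 v) := by
  have hcont : Continuous g := continuous_iff_continuousAt.2 fun y => (hg y).continuousAt
  refine ((integrable_sq_gaussianReal 0 v).const_mul K).mono'
    (by fun_prop) (ae_of_all _ fun z => ?_)
  simpa using abs_taylor_one_remainder_le hg hg' 0 z

-- The linear Taylor term vanishes because the Gaussian is centred.
lemma integral_taylor_one_remainder_gaussianReal (hg : ∀ y, HasDerivAt g (g' y) y)
    (hg' : LipschitzWith K g') (v : NNReal) :
    ∫ z, (g z - g 0 - g' 0 * z) ∂gaussianReal 0 v = (∫ z, g z ∂gaussianReal 0 v) - g 0 := by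
  have hlin : Integrable (fun z => g' 0 * z) (gaussianReal 0 v) :=
    ((memLp_id_gaussianReal 1).integrable le_rfl).const_mul _
  have hrem := integrable_taylor_one_remainder_gaussianReal hg hg' v
  have hint : Integrable g (gaussianReal 0 v) :=
    ((hrem.add hlin).add (integrable_const (g 0))).congr (ae_of_all _ fun z => by simp)
  have hsub : Integrable (fun z => g z - g 0) (gaussianReal 0 v) := hint.sub (integrable_const _)
  rw [integral_sub hsub hlin, integral_sub hint (integrable_const _), integral_const_mul,
    integral_id_gaussianReal]
  simp

lemma abs_integral_gaussianReal_sub_le (hg : ∀ y, HasDerivAt g (g' y) y)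
    (hg' : LipschitzWith K g') (v : NNReal) :
    |(∫ z, g z ∂gaussianReal 0 v) - g 0| ≤ K * v := by
  rw [← integral_taylor_one_remainder_gaussianReal hg hg', ← integral_sq_gaussianReal_zero v,
    ← integral_const_mul, ← Real.norm_eq_abs]
  refine norm_integral_le_of_norm_le ((integrable_sq_gaussianReal 0 v).const_mul K)
    (ae_of_all _ fun z => ?_)
  simpa using abs_taylor_one_remainder_le hg hg' 0 z

lemma tendsto_inv_mul_integral_gaussianReal_sub (hg : ∀ y, HasDerivAt g (g' y) y)
    (hg' : LipschitzWith K g') {c : ℝ} (hc : HasDerivAt g' c 0) :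
    Tendsto (fun h : ℝ => h⁻¹ * ((∫ z, g z ∂gaussianReal 0 h.toNNReal) - g 0))
      (𝓝[>] 0) (𝓝 (c / 2)) := by
  let R : ℝ → ℝ := fun z => g z - g 0 - g' 0 * z
  have hcont : Continuous R := by
    have : Continuous g := continuous_iff_continuousAt.2 fun y => (hg y).continuousAt
    fun_prop
  have hscale : ∀ h : ℝ, 0 < h → ∫ ζ, h⁻¹ * R (√h * ζ) ∂gaussianReal 0 1 =
      h⁻¹ * ((∫ z, g z ∂gaussianReal 0 h.toNNReal) - g 0) := fun h hh => by
    rw [integral_const_mul, ← integral_taylor_one_remainder_gaussianReal hg hg',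
      gaussianReal_zero_toNNReal_eq_map hh.le,
      integral_map (by fun_prop) hcont.aestronglyMeasurable]
  have hdominated := tendsto_integral_filter_of_dominated_convergence (μ := gaussianReal 0 1)
    (l := 𝓝[>] (0 : ℝ)) (F := fun h ζ => h⁻¹ * R (√h * ζ)) (fun ζ => K * ζ ^ 2)
    (Eventually.of_forall fun h => by fun_prop)
    (by
      filter_upwards [self_mem_nhdsWithin] with h (hh : 0 < h)
      refine ae_of_all _ fun ζ => ?_
      have hbound := abs_taylor_one_remainder_le hg hg' 0 (√h * ζ)
      rw [sub_zero, mul_pow, Real.sq_sqrt hh.le] at hbound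
      rw [norm_mul, norm_inv, Real.norm_of_nonneg hh.le, inv_mul_le_iff₀ hh]
      exact hbound.trans_eq (by ring))
    ((integrable_sq_gaussianReal 0 1).const_mul _)
    (ae_of_all _ (tendsto_inv_mul_taylor_one_remainder (Eventually.of_forall hg) hc))
  rw [integral_const_mul, integral_sq_gaussianReal_zero, NNReal.coe_one, mul_one] at hdominated
  refine hdominated.congr' ?_
  filter_upwards [self_mem_nhdsWithin] with h (hh : 0 < h) using hscale h hh

end Gaussian

section Circle

variable {p : ℝ}

lemma norm_coe_addCircle_le (r : ℝ) : ‖(r : AddCircle p)‖ ≤ |r| :=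
  QuotientAddGroup.norm_mk_le_norm

/-- `f'` is the derivative of `f : AddCircle p → ℝ`, read off on lifts along `ℝ → AddCircle p`. -/
def HasLiftDeriv (f f' : AddCircle p → ℝ) : Prop :=
  ∀ r : ℝ, HasDerivAt (fun s : ℝ => f s) (f' r) r

namespace HasLiftDeriv

variable {f f' : AddCircle p → ℝ}

lemma continuous (hf : HasLiftDeriv f f') : Continuous f :=
  (QuotientAddGroup.isQuotientMap_mk _).continuous_iff.2 <|
    continuous_iff_continuousAt.2 fun r => (hf r).continuousAt

lemma hasDerivAt_add (hf : HasLiftDeriv f f') (u : AddCircle p) (z : ℝ) :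
    HasDerivAt (fun z : ℝ => f (u + z)) (f' (u + z)) z := by
  obtain ⟨a, rfl⟩ := QuotientAddGroup.mk_surjective u
  exact (hf (a + z)).comp_const_add a z

lemma lipschitzWith_add {C : NNReal} (hf : HasLiftDeriv f f') (hC : ∀ u, ‖f' u‖ ≤ C)
    (u : AddCircle p) : LipschitzWith C (fun z : ℝ => f (u + z)) :=
  lipschitzWith_of_nnnorm_deriv_le (fun z => (hf.hasDerivAt_add u z).differentiableAt) fun z => by
    rw [(hf.hasDerivAt_add u z).deriv]
    exact hC _

lemma norm_inv_mul_add_integral_sub_le {C M : NNReal} (hf : HasLiftDeriv f f')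
    (hC : ∀ u, ‖f' u‖ ≤ C) {β : ℝ → ℝ} {t s : ℝ} (hts : t < s) (hM : ∀ r ∈ Ioc t s, ‖β r‖ ≤ M)
    (u : AddCircle p) (z : ℝ) :
    ‖(s - t)⁻¹ * (f (u + ((z + ∫ r in t..s, β r : ℝ) : AddCircle p)) - f (u + z))‖ ≤ C * M := by
  have hst : 0 < s - t := sub_pos.2 hts
  have hintegral : ‖∫ r in t..s, β r‖ ≤ M * |s - t| :=
    intervalIntegral.norm_integral_le_of_norm_le_const fun r hr => hM r (uIoc_of_le hts.le ▸ hr)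
  rw [norm_mul, norm_inv, Real.norm_of_nonneg hst.le, inv_mul_le_iff₀ hst]
  calc _ ≤ C * ‖z + (∫ r in t..s, β r) - z‖ := (hf.lipschitzWith_add hC u).norm_sub_le _ _
    _ ≤ C * (M * |s - t|) := by rw [add_sub_cancel_left]; gcongr
    _ = (s - t) * (C * M) := by rw [abs_of_pos hst]; ring

lemma hasStrictDerivAt_add (hf : HasLiftDeriv f f') (hf' : Continuous f') (u : AddCircle p) :
    HasStrictDerivAt (fun z : ℝ => f (u + z)) (f' u) 0 := by
  have hcont : Continuous fun z : ℝ => f' (u + z) :=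
    hf'.comp (continuous_const.add (AddCircle.continuous_mk' p))
  simpa using hasStrictDerivAt_of_hasDerivAt_of_continuousAt
    (Eventually.of_forall (hf.hasDerivAt_add u)) hcont.continuousAt (x := 0)

end HasLiftDeriv

end Circle

section Independence

variable {Ω α β γ : Type*} [MeasurableSpace α] [MeasurableSpace β]

lemma indepFun_prodMk_of_indepFun_prodMk [MeasurableSpace γ] [MeasurableSpace Ω] {P : Measure Ω}
    [IsProbabilityMeasure P] {X : Ω → α} {Y : Ω → β} {Z : Ω → γ} (hX : Measurable X)
    (hY : Measurable Y) (hZ : Measurable Z) (hYZ : IndepFun Y Z P)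
    (hXYZ : IndepFun X (fun ω => (Y ω, Z ω)) P) : IndepFun Y (fun ω => (X ω, Z ω)) P := by
  have hXZ : IndepFun X Z P := hXYZ.comp measurable_id measurable_snd
  have hlawX := Measure.isProbabilityMeasure_map (μ := P) hX.aemeasurable
  have hlawY := Measure.isProbabilityMeasure_map (μ := P) hY.aemeasurable
  have hlawZ := Measure.isProbabilityMeasure_map (μ := P) hZ.aemeasurable
  rw [indepFun_iff_map_prod_eq_prod_map_map (by fun_prop) (by fun_prop)] at hYZ hXYZ hXZ ⊢
  have hswap : MeasurePreserving (fun q : α × β × γ => (q.2.1, q.1, q.2.2))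
      ((P.map X).prod ((P.map Y).prod (P.map Z))) ((P.map Y).prod ((P.map X).prod (P.map Z))) :=
    ((measurePreserving_prodAssoc _ _ _).comp (Measure.measurePreserving_swap.prod
      (MeasurePreserving.id _))).comp ((measurePreserving_prodAssoc _ _ _).symm _)
  rw [hXZ, ← hswap.map_eq, ← hYZ, ← hXYZ, Measure.map_map hswap.measurable (by fun_prop)]
  rfl

lemma indepFun_of_tendsto_ae [TopologicalSpace β] [TopologicalSpace.IsCompletelyMetrizableSpace β]
    [BorelSpace β] [Nonempty β] {m mΩ : MeasurableSpace Ω} {P : Measure Ω} {D : Ω → α} {X : Ω → β}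
    {Y : ℕ → Ω → β} (hD : Indep (MeasurableSpace.comap D inferInstance) m P)
    (hY : ∀ n, StronglyMeasurable[m] (Y n))
    (hlim : ∀ᵐ ω ∂P, Tendsto (fun n => Y n ω) atTop (𝓝 (X ω))) : IndepFun D X P := by
  have hmeas : Measurable[m] fun ω => limUnder atTop fun n => Y n ω :=
    let := m
    (StronglyMeasurable.limUnder hY).measurable
  refine IndepFun.congr (g := fun ω => limUnder atTop fun n => Y n ω)
    (IndepFun_iff_Indep _ _ _ |>.2 (indep_of_indep_of_le_right hD hmeas.comap_le)) ae_eq_rfl ?_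
  filter_upwards [hlim] with ω hω using hω.limUnder_eq

end Independence

section Picard

variable {p : ℝ} {b : ℝ → AddCircle p → ℝ}

/-- Picard iteration for the integral equation `x s = a + ∫ r in 0..s, b r (x r) + β s` on the
circle, with additive noise path `β`. -/
def picard (b : ℝ → AddCircle p → ℝ) (a : AddCircle p) (β : ℝ → ℝ) : ℕ → ℝ → AddCircle p
  | 0 => fun _ => a
  | n + 1 => fun s => a + (((∫ r in (0 : ℝ)..s, b r (picard b a β n r)) + β s : ℝ) : AddCircle p)

lemma continuous_drift_along (hb : Continuous (Function.uncurry b)) {x : ℝ → AddCircle p}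
    (hx : Continuous x) : Continuous fun r => b r (x r) :=
  hb.comp (continuous_id.prodMk hx)

lemma continuous_picard (hb : Continuous (Function.uncurry b)) (a : AddCircle p) {β : ℝ → ℝ}
    (hβ : Continuous β) (n : ℕ) : Continuous (picard b a β n) := by
  induction n with
  | zero => exact continuous_const
  | succ n ih =>
    have hprim : Continuous fun s => ∫ r in (0 : ℝ)..s, b r (picard b a β n r) :=
      intervalIntegral.continuous_primitive
        (fun _ _ => (continuous_drift_along hb ih).intervalIntegrable _ _) 0
    exact continuous_const.add ((AddCircle.continuous_mk' p).comp (hprim.add hβ))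

lemma measurable_intervalIntegral_drift {Ω : Type*} [MeasurableSpace Ω]
    (hb : Continuous (Function.uncurry b)) {X : Ω → ℝ → AddCircle p} (hX : ∀ ω, Continuous (X ω))
    (hXm : ∀ s, Measurable fun ω => X ω s) (s t : ℝ) :
    Measurable fun ω => ∫ r in s..t, b r (X ω r) := by
  have hjoint : StronglyMeasurable (Function.uncurry fun (r : ℝ) (ω : Ω) => b r (X ω r)) :=
    (measurable_uncurry_of_continuous_of_measurable (fun ω => continuous_drift_along hb (hX ω))
      fun r => (hb.uncurry_left r).measurable.comp (hXm r)).stronglyMeasurable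
  exact (hjoint.integral_prod_left (μ := volume.restrict (Ioc s t))).measurable.sub
    (hjoint.integral_prod_left (μ := volume.restrict (Ioc t s))).measurable

lemma measurable_picard {Ω : Type*} [MeasurableSpace Ω] (hb : Continuous (Function.uncurry b))
    {ξ : Ω → AddCircle p} (hξ : Measurable ξ) {β : Ω → ℝ → ℝ} (hβ : ∀ ω, Continuous (β ω))
    (hβm : ∀ s, Measurable fun ω => β ω s) (n : ℕ) (s : ℝ) :
    Measurable fun ω => picard b (ξ ω) (β ω) n s := by
  induction n generalizing s with
  | zero => exact hξ
  | succ n ih =>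
    have hint := measurable_intervalIntegral_drift hb
      (fun ω => continuous_picard hb (ξ ω) (hβ ω) n) ih 0 s
    exact hξ.add ((AddCircle.continuous_mk' p).measurable.comp (hint.add (hβm s)))

variable {K : NNReal} {a : AddCircle p} {β : ℝ → ℝ} {x : ℝ → AddCircle p} {t : ℝ}

lemma norm_picard_sub_le [Fact (0 < p)] (hb : Continuous (Function.uncurry b))
    (hK : ∀ s, LipschitzWith K (b s)) (hβ : Continuous β) (hx : Continuous x)
    (hxt : ∀ s ∈ Icc 0 t, x s = a + (((∫ r in (0 : ℝ)..s, b r (x r)) + β s : ℝ) : AddCircle p))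
    (n : ℕ) {s : ℝ} (hs : s ∈ Icc 0 t) :
    ‖picard b a β n s - x s‖ ≤ |p| / 2 * ((K * s) ^ n / n.factorial) := by
  induction n generalizing s with
  | zero => simpa using AddCircle.norm_le_half_period p (Fact.out : 0 < p).ne'
  | succ n ih =>
    have hstep : ∀ r ∈ Ioc 0 s, ‖b r (picard b a β n r) - b r (x r)‖ ≤
        |p| / 2 * K ^ (n + 1) / n.factorial * r ^ n := fun r hr => calc
      _ ≤ K * ‖picard b a β n r - x r‖ := (hK r).norm_sub_le _ _
      _ ≤ K * (|p| / 2 * ((K * r) ^ n / n.factorial)) := by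
        gcongr; exact ih ⟨hr.1.le, hr.2.trans hs.2⟩
      _ = |p| / 2 * K ^ (n + 1) / n.factorial * r ^ n := by ring
    have hdiff : picard b a β (n + 1) s - x s =
        ((∫ r in (0 : ℝ)..s, b r (picard b a β n r) - b r (x r) : ℝ) : AddCircle p) := by
      rw [intervalIntegral.integral_sub
        ((continuous_drift_along hb (continuous_picard hb a hβ n)).intervalIntegrable _ _)
        ((continuous_drift_along hb hx).intervalIntegrable _ _), hxt s hs, picard,
        add_sub_add_left_eq_sub, ← AddCircle.coe_sub, add_sub_add_right_eq_sub]
    calc ‖picard b a β (n + 1) s - x s‖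
        ≤ ‖∫ r in (0 : ℝ)..s, b r (picard b a β n r) - b r (x r)‖ :=
          hdiff ▸ norm_coe_addCircle_le _
      _ ≤ ∫ r in (0 : ℝ)..s, |p| / 2 * K ^ (n + 1) / n.factorial * r ^ n :=
          intervalIntegral.norm_integral_le_of_norm_le hs.1 (ae_of_all _ hstep)
            (Continuous.intervalIntegrable (by fun_prop) _ _)
      _ = |p| / 2 * ((K * s) ^ (n + 1) / (n + 1).factorial) := by
          rw [intervalIntegral.integral_const_mul, integral_pow, Nat.factorial_succ]
          push_cast
          field_simp
          ring

lemma tendsto_picard [Fact (0 < p)] (hb : Continuous (Function.uncurry b))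
    (hK : ∀ s, LipschitzWith K (b s)) (hβ : Continuous β) (hx : Continuous x) (ht : 0 ≤ t)
    (hxt : ∀ s ∈ Icc 0 t, x s = a + (((∫ r in (0 : ℝ)..s, b r (x r)) + β s : ℝ) : AddCircle p)) :
    Tendsto (fun n => picard b a β n t) atTop (𝓝 (x t)) := by
  refine tendsto_iff_norm_sub_tendsto_zero.2 <| squeeze_zero (fun _ => norm_nonneg _)
    (fun n => norm_picard_sub_le hb hK hβ hx hxt n ⟨ht, le_rfl⟩) ?_
  simpa using (FloorSemiring.tendsto_pow_div_factorial_atTop (K * t)).const_mul (|p| / 2)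

end Picard

section AdditiveNoise

variable {p T : ℝ} {Ω : Type*} [MeasurableSpace Ω] {P : Measure Ω}

lemma integrable_comp_add_prod [Fact (0 < p)] [IsFiniteMeasure P] {f : AddCircle p → ℝ}
    (hf : Continuous f) {Y : Ω → AddCircle p} (hY : Measurable Y) (ν : Measure ℝ)
    [IsFiniteMeasure ν] : Integrable (fun q : Ω × ℝ => f (Y q.1 + q.2)) (P.prod ν) :=
  integrable_comp_of_continuous hf ((hY.comp measurable_fst).add
    ((AddCircle.continuous_mk' p).measurable.comp measurable_snd))

/-- `X` solves `dX = b(s, X) ds + dB` on the circle over the time interval `[0, T]`, driven by a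
standard Brownian motion independent of the initial value. All paths are taken continuous on the
whole real line, so that no boundary effects occur at `0` and `T`. -/
structure IsAdditiveSDESolution (T : ℝ) (P : Measure Ω) (b : ℝ → AddCircle p → ℝ)
    (B : Ω → ℝ → ℝ) (X : Ω → ℝ → AddCircle p) : Prop where
  isStandardBM : IsStandardBM T P B
  indepFun_initial : IndepFun (fun ω => X ω 0) B P
  continuous_noise : ∀ ω, Continuous (B ω)
  continuous_path : ∀ ω, Continuous (X ω)
  measurable_path : ∀ s, Measurable fun ω => X ω s
  ae_eq : ∀ᵐ ω ∂P, ∀ s ∈ Icc 0 T,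
    X ω s = X ω 0 + (((∫ r in (0 : ℝ)..s, b r (X ω r)) + B ω s : ℝ) : AddCircle p)

namespace IsAdditiveSDESolution

variable {b : ℝ → AddCircle p → ℝ} {B : Ω → ℝ → ℝ} {X : Ω → ℝ → AddCircle p}
  {K : NNReal} {f f' f'' : AddCircle p → ℝ} {s t : ℝ}

lemma measurable_noise (hX : IsAdditiveSDESolution T P b B X) (s : ℝ) :
    Measurable fun ω => B ω s :=
  hX.isStandardBM.2.2.1 s

lemma measurable_increment (hX : IsAdditiveSDESolution T P b B X) (t s : ℝ) :
    Measurable fun ω => B ω s - B ω t :=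
  (hX.measurable_noise s).sub (hX.measurable_noise t)

lemma map_increment (hX : IsAdditiveSDESolution T P b B X) (ht : 0 ≤ t) (hts : t ≤ s)
    (hsT : s ≤ T) : P.map (fun ω => B ω s - B ω t) = gaussianReal 0 (s - t).toNNReal :=
  (hX.isStandardBM.2.2.2 t s ht hts hsT).1

lemma ae_eq_add (hb : Continuous (Function.uncurry b)) (hX : IsAdditiveSDESolution T P b B X) :
    ∀ᵐ ω ∂P, ∀ t ∈ Icc 0 T, ∀ s ∈ Icc 0 T, X ω s =
      X ω t + (((B ω s - B ω t) + ∫ r in t..s, b r (X ω r) : ℝ) : AddCircle p) := by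
  filter_upwards [hX.ae_eq] with ω hω t ht s hs
  have hint : ∀ c d, IntervalIntegrable (fun r => b r (X ω r)) volume c d :=
    (continuous_drift_along hb (hX.continuous_path ω)).intervalIntegrable
  rw [hω t ht, hω s hs, add_assoc, ← AddCircle.coe_add,
    ← intervalIntegral.integral_add_adjacent_intervals (hint 0 t) (hint t s)]
  congr 2
  ring

-- `X ω t` is a limit of Picard iterates, which depend only on `X ω 0` and the noise on `[0, t]`.
lemma indepFun_increment [Fact (0 < p)] [IsProbabilityMeasure P]
    (hb : Continuous (Function.uncurry b)) (hK : ∀ s, LipschitzWith K (b s))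
    (hX : IsAdditiveSDESolution T P b B X) (ht : 0 ≤ t) (hts : t ≤ s) (hsT : s ≤ T) :
    IndepFun (fun ω => B ω s - B ω t) (fun ω => X ω t) P := by
  set past : Ω → AddCircle p × (Icc 0 t → ℝ) := fun ω => (X ω 0, fun r => B ω r)
  have hinit : IndepFun (fun ω => X ω 0)
      (fun ω => (B ω s - B ω t, fun r : Icc 0 t => B ω r)) P :=
    hX.indepFun_initial.comp (ψ := fun β : ℝ → ℝ => (β s - β t, fun r : Icc 0 t => β r))
      measurable_id (by fun_prop)
  have hD : IndepFun (fun ω => B ω s - B ω t) past P :=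
    indepFun_prodMk_of_indepFun_prodMk (hX.measurable_path 0) (hX.measurable_increment t s)
      (measurable_pi_lambda _ fun r => hX.measurable_noise r)
      (hX.isStandardBM.2.2.2 t s ht hts hsT).2 hinit
  have hstopped : ∀ ω, Continuous fun r => B ω (projIcc 0 t ht r) := fun ω =>
    (hX.continuous_noise ω).comp (continuous_subtype_val.comp continuous_projIcc)
  refine indepFun_of_tendsto_ae (m := MeasurableSpace.comap past inferInstance)
    (Y := fun n ω => picard b (X ω 0) (fun r => B ω (projIcc 0 t ht r)) n t)
    ((IndepFun_iff_Indep _ _ _).1 hD) (fun n => ?_) ?_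
  · let := MeasurableSpace.comap past inferInstance
    have hpast_meas : Measurable past := comap_measurable past
    have hnoise_meas : ∀ r, Measurable fun ω => B ω (projIcc 0 t ht r) := fun r =>
      (measurable_pi_apply (projIcc 0 t ht r)).comp hpast_meas.snd
    exact (measurable_picard hb hpast_meas.fst hstopped hnoise_meas n t).stronglyMeasurable
  · filter_upwards [hX.ae_eq] with ω hω
    refine tendsto_picard hb hK (hstopped ω) (hX.continuous_path ω) ht fun r hr => ?_
    rw [projIcc_of_mem ht hr]
    exact hω r ⟨hr.1, hr.2.trans (hts.trans hsT)⟩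

lemma integral_comp_add_increment [Fact (0 < p)] [IsProbabilityMeasure P]
    (hb : Continuous (Function.uncurry b)) (hK : ∀ s, LipschitzWith K (b s))
    (hX : IsAdditiveSDESolution T P b B X) (hf : Continuous f) (ht : 0 ≤ t) (hts : t ≤ s)
    (hsT : s ≤ T) : ∫ ω, f (X ω t + ((B ω s - B ω t : ℝ) : AddCircle p)) ∂P =
      ∫ ω, ∫ z : ℝ, f (X ω t + z) ∂gaussianReal 0 (s - t).toNNReal ∂P := by
  have hD := hX.measurable_increment t s
  have hXt := hX.measurable_path t
  have hjoint : Continuous fun q : AddCircle p × ℝ => f (q.1 + q.2) :=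
    hf.comp (continuous_fst.add ((AddCircle.continuous_mk' p).comp continuous_snd))
  have hlaw := (indepFun_iff_map_prod_eq_prod_map_map hXt.aemeasurable hD.aemeasurable).1
    (hX.indepFun_increment hb hK ht hts hsT).symm
  rw [hX.map_increment ht hts hsT] at hlaw
  have := Measure.isProbabilityMeasure_map (μ := P) hXt.aemeasurable
  have hint := integrable_comp_add_prod (P := P.map fun ω => X ω t) hf (Y := fun u => u)
    measurable_id (gaussianReal 0 (s - t).toNNReal)
  calc ∫ ω, f (X ω t + ((B ω s - B ω t : ℝ) : AddCircle p)) ∂P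
      = ∫ q, f (q.1 + q.2) ∂(P.map fun ω => (X ω t, B ω s - B ω t)) :=
        (integral_map (hXt.prodMk hD).aemeasurable hjoint.aestronglyMeasurable).symm
    _ = ∫ u, ∫ z : ℝ, f (u + z) ∂gaussianReal 0 (s - t).toNNReal ∂(P.map fun ω => X ω t) := by
        rw [hlaw, integral_prod _ hint]
    _ = ∫ ω, ∫ z : ℝ, f (X ω t + z) ∂gaussianReal 0 (s - t).toNNReal ∂P :=
        integral_map hXt.aemeasurable hint.integral_prod_left.aestronglyMeasurable

lemma tendsto_integral_noise [Fact (0 < p)] [IsProbabilityMeasure P]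
    (hb : Continuous (Function.uncurry b)) (hK : ∀ s, LipschitzWith K (b s))
    (hX : IsAdditiveSDESolution T P b B X) (hf : HasLiftDeriv f f') (hf' : HasLiftDeriv f' f'')
    (hf'' : Continuous f'') (ht : 0 ≤ t) (htT : t < T) :
    Tendsto (fun s => (s - t)⁻¹ * ((∫ ω, f (X ω t + ((B ω s - B ω t : ℝ) : AddCircle p)) ∂P) -
      ∫ ω, f (X ω t) ∂P)) (𝓝[>] t) (𝓝 (∫ ω, f'' (X ω t) / 2 ∂P)) := by
  obtain ⟨C, hC⟩ := exists_norm_le_of_continuous hf''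
  have hgauss : ∀ ω s, |(∫ z : ℝ, f (X ω t + z) ∂gaussianReal 0 (s - t).toNNReal) - f (X ω t)| ≤
      C * (s - t).toNNReal := fun ω s => by
    simpa using abs_integral_gaussianReal_sub_le (hf.hasDerivAt_add (X ω t))
      (hf'.lipschitzWith_add hC (X ω t)) (s - t).toNNReal
  have hint : ∀ s, Integrable
      (fun ω => ∫ z : ℝ, f (X ω t + z) ∂gaussianReal 0 (s - t).toNNReal) P := fun s =>
    (integrable_comp_add_prod hf.continuous (hX.measurable_path t) _).integral_prod_left
  have hft := integrable_comp_of_continuous (P := P) hf.continuous (hX.measurable_path t)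
  have hshift : Tendsto (fun s => s - t) (𝓝[>] t) (𝓝[>] 0) := by
    refine tendsto_nhdsWithin_iff.2 ⟨?_,
      eventually_mem_nhdsWithin.mono fun s hs => sub_pos.2 (mem_Ioi.1 hs)⟩
    simpa using ((continuous_sub_right t).tendsto t).mono_left nhdsWithin_le_nhds
  have hdominated := tendsto_integral_filter_of_dominated_convergence (μ := P) (l := 𝓝[>] t)
    (F := fun s ω => (s - t)⁻¹ *
      ((∫ z : ℝ, f (X ω t + z) ∂gaussianReal 0 (s - t).toNNReal) - f (X ω t)))
    (f := fun ω => f'' (X ω t) / 2) (fun _ => C)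
    (Eventually.of_forall fun s => (((hint s).sub hft).const_mul _).aestronglyMeasurable)
    (by
      filter_upwards [self_mem_nhdsWithin] with s (hs : t < s)
      refine ae_of_all _ fun ω => ?_
      have hst : 0 < s - t := sub_pos.2 hs
      rw [norm_mul, norm_inv, Real.norm_of_nonneg hst.le, inv_mul_le_iff₀ hst, mul_comm (s - t)]
      exact (hgauss ω s).trans_eq (by rw [Real.coe_toNNReal _ hst.le]))
    (integrable_const _)
    (ae_of_all _ fun ω => by
      simpa [Function.comp_def] using (tendsto_inv_mul_integral_gaussianReal_sub
        (hf.hasDerivAt_add (X ω t)) (hf'.lipschitzWith_add hC (X ω t))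
        (hf'.hasDerivAt_add (X ω t) 0)).comp hshift)
  refine hdominated.congr' ?_
  filter_upwards [Ioc_mem_nhdsGT htT] with s hs
  rw [integral_const_mul, integral_sub (hint s) hft,
    hX.integral_comp_add_increment hb hK hf.continuous ht hs.1.le hs.2]

lemma tendsto_inv_mul_integral_drift (hb : Continuous (Function.uncurry b)) {x : ℝ → AddCircle p}
    (hx : Continuous x) (t : ℝ) :
    Tendsto (fun s => (s - t)⁻¹ * ∫ r in t..s, b r (x r)) (𝓝[>] t) (𝓝 (b t (x t))) := by
  have hderiv := ((continuous_drift_along hb hx).integral_hasStrictDerivAt t t).hasDerivAt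
  refine (hderiv.tendsto_slope.mono_left (nhdsWithin_mono _ fun s hs => ne_of_gt hs)).congr ?_
  simp [slope_def_module]

lemma tendsto_drift_pathwise (hb : Continuous (Function.uncurry b))
    (hX : IsAdditiveSDESolution T P b B X) (hf : HasLiftDeriv f f') (hf' : Continuous f')
    (ω : Ω) (t : ℝ) :
    Tendsto (fun s => (s - t)⁻¹ *
      (f (X ω t + ((B ω s - B ω t + ∫ r in t..s, b r (X ω r) : ℝ) : AddCircle p)) -
        f (X ω t + ((B ω s - B ω t : ℝ) : AddCircle p))))
      (𝓝[>] t) (𝓝 (f' (X ω t) * b t (X ω t))) := by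
  have hnoise : Continuous fun s => B ω s - B ω t := by
    have := hX.continuous_noise ω
    fun_prop
  have hdrift : Continuous fun s => ∫ r in t..s, b r (X ω r) :=
    intervalIntegral.continuous_primitive
      (continuous_drift_along hb (hX.continuous_path ω)).intervalIntegrable t
  refine tendsto_inv_mul_sub_of_hasStrictDerivAt (hf.hasStrictDerivAt_add hf' (X ω t)) ?_ ?_
    (tendsto_inv_mul_integral_drift hb (hX.continuous_path ω) t)
  · simpa using (hnoise.tendsto t).mono_left nhdsWithin_le_nhds
  · simpa using (hdrift.tendsto t).mono_left nhdsWithin_le_nhds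

lemma tendsto_integral_drift [Fact (0 < p)] [IsProbabilityMeasure P]
    (hb : Continuous (Function.uncurry b)) (hX : IsAdditiveSDESolution T P b B X)
    (hf : HasLiftDeriv f f') (hf' : Continuous f') (ht : 0 ≤ t) (htT : t < T) :
    Tendsto (fun s => (s - t)⁻¹ * ((∫ ω, f (X ω s) ∂P) -
      ∫ ω, f (X ω t + ((B ω s - B ω t : ℝ) : AddCircle p)) ∂P))
      (𝓝[>] t) (𝓝 (∫ ω, f' (X ω t) * b t (X ω t) ∂P)) := by
  obtain ⟨C, hC⟩ := exists_norm_le_of_continuous hf'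
  obtain ⟨M, hM⟩ := exists_norm_le_of_continuous_uncurry hb 0 T
  have hpath : ∀ s, Integrable (fun ω => f (X ω s)) P := fun s =>
    integrable_comp_of_continuous hf.continuous (hX.measurable_path s)
  have hnoise : ∀ s, Integrable
      (fun ω => f (X ω t + ((B ω s - B ω t : ℝ) : AddCircle p))) P := fun s =>
    integrable_comp_of_continuous hf.continuous ((hX.measurable_path t).add
      ((AddCircle.continuous_mk' p).measurable.comp (hX.measurable_increment t s)))
  have hIoc : Ioc t T ∈ 𝓝[>] t := Ioc_mem_nhdsGT htT
  have hdominated := tendsto_integral_filter_of_dominated_convergence (μ := P) (l := 𝓝[>] t)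
    (F := fun s ω => (s - t)⁻¹ *
      (f (X ω s) - f (X ω t + ((B ω s - B ω t : ℝ) : AddCircle p))))
    (f := fun ω => f' (X ω t) * b t (X ω t)) (fun _ => C * M)
    (Eventually.of_forall fun s => (((hpath s).sub (hnoise s)).const_mul _).aestronglyMeasurable)
    (by
      filter_upwards [hIoc] with s hs
      filter_upwards [hX.ae_eq_add hb] with ω hω
      rw [hω t ⟨ht, htT.le⟩ s ⟨ht.trans hs.1.le, hs.2⟩]
      exact hf.norm_inv_mul_add_integral_sub_le hC hs.1
        (fun r hr => hM r ⟨ht.trans hr.1.le, hr.2.trans hs.2⟩ _) _ _)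
    (integrable_const _)
    (by
      filter_upwards [hX.ae_eq_add hb] with ω hω
      refine (hX.tendsto_drift_pathwise hb hf hf' ω t).congr' ?_
      filter_upwards [hIoc] with s hs
      rw [hω t ⟨ht, htT.le⟩ s ⟨ht.trans hs.1.le, hs.2⟩])
  refine hdominated.congr fun s => ?_
  rw [integral_const_mul, integral_sub (hpath s) (hnoise s)]

theorem hasDerivWithinAt_integral [Fact (0 < p)] [IsProbabilityMeasure P]
    (hb : Continuous (Function.uncurry b)) (hK : ∀ s, LipschitzWith K (b s))
    (hX : IsAdditiveSDESolution T P b B X) (hf : HasLiftDeriv f f') (hf' : HasLiftDeriv f' f'')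
    (hf'' : Continuous f'') (ht : 0 ≤ t) (htT : t < T) :
    HasDerivWithinAt (fun s => ∫ ω, f (X ω s) ∂P)
      (∫ ω, (1 / 2 * f'' (X ω t) + f' (X ω t) * b t (X ω t)) ∂P) (Ioi t) t := by
  have hsum := (hX.tendsto_integral_noise hb hK hf hf' hf'' ht htT).add
    (hX.tendsto_integral_drift hb hf hf'.continuous ht htT)
  have hdrift : Integrable (fun ω => f' (X ω t) * b t (X ω t)) P :=
    integrable_comp_of_continuous (hf'.continuous.mul (hb.uncurry_left t)) (hX.measurable_path t)
  rw [← integral_add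
    (integrable_comp_of_continuous (hf''.div_const 2) (hX.measurable_path t)) hdrift] at hsum
  rw [hasDerivWithinAt_iff_tendsto_slope' self_notMem_Ioi]
  refine (hsum.congr fun s => ?_).trans_eq ?_
  · rw [slope_def_module, smul_eq_mul]
    ring
  · congr! 3
    ring

theorem integral_sub_integral_eq [Fact (0 < p)] [IsProbabilityMeasure P]
    (hb : Continuous (Function.uncurry b)) (hK : ∀ s, LipschitzWith K (b s))
    (hX : IsAdditiveSDESolution T P b B X) (hf : HasLiftDeriv f f') (hf' : HasLiftDeriv f' f'')
    (hf'' : Continuous f'') (ht : t ∈ Icc 0 T) :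
    (∫ ω, f (X ω t) ∂P) - ∫ ω, f (X ω 0) ∂P =
      ∫ s in (0 : ℝ)..t, ∫ ω, (1 / 2 * f'' (X ω s) + f' (X ω s) * b s (X ω s)) ∂P := by
  have hgen : Continuous (Function.uncurry fun s u => 1 / 2 * f'' u + f' u * b s u) := by
    have := hf'.continuous
    fun_prop
  have hlaw : Continuous fun s => ∫ ω, f (X ω s) ∂P :=
    continuous_integral_comp_path (g := fun _ => f) (hf.continuous.comp continuous_snd)
      hX.continuous_path hX.measurable_path
  have hgen_law := continuous_integral_comp_path (P := P) hgen hX.continuous_path hX.measurable_path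
  refine (intervalIntegral.integral_eq_sub_of_hasDeriv_right hlaw.continuousOn (fun s hs => ?_)
    (hgen_law.intervalIntegrable 0 t)).symm
  rw [min_eq_left ht.1, max_eq_right ht.1] at hs
  exact hX.hasDerivWithinAt_integral hb hK hf hf' hf'' hs.1.le (hs.2.trans_le ht.2)

end IsAdditiveSDESolution

end AdditiveNoise

section MeanField

variable {Ω Y E : Type*} [MeasurableSpace Ω] {P : Measure Ω} {w : Y → ℝ} {θ : Y → Ω → ℝ → E}

lemma norm_mul_integral_le [IsProbabilityMeasure P] {g : E → ℝ} {C : ℝ} (hC : ∀ v, ‖g v‖ ≤ C)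
    (y : Y) (s : ℝ) : ‖w y * ∫ ω, g (θ y ω s) ∂P‖ ≤ ‖w y‖ * C := by
  rw [norm_mul]
  gcongr
  simpa using norm_integral_le_of_norm_le_const (μ := P) (ae_of_all _ fun ω => hC (θ y ω s))

variable [MeasurableSpace Y] {ν : Measure Y}

/-- The force `∫ w(y) 𝔼 Γ(u, θ^y_s) ν(dy)` exerted at time `s` on a particle at `u` by a population
`θ` of random paths labeled by `y`, with weights `w`. -/
def meanFieldForce (P : Measure Ω) (ν : Measure Y) (w : Y → ℝ) (Γ : E → E → ℝ)
    (θ : Y → Ω → ℝ → E) (s : ℝ) (u : E) : ℝ :=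
  ∫ y, w y * ∫ ω, Γ u (θ y ω s) ∂P ∂ν

lemma aestronglyMeasurable_mul_integral [SFinite P] [MeasurableSpace E] (hw : Integrable w ν)
    (hθ : ∀ s, Measurable fun q : Y × Ω => θ q.1 q.2 s) {g : E → ℝ} (hg : Measurable g) (s : ℝ) :
    AEStronglyMeasurable (fun y => w y * ∫ ω, g (θ y ω s) ∂P) ν :=
  hw.aestronglyMeasurable.mul
    (hg.comp (hθ s)).stronglyMeasurable.integral_prod_right'.aestronglyMeasurable

section Topological

variable [TopologicalSpace E] [CompactSpace E] [MeasurableSpace E] [OpensMeasurableSpace E]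
  [IsProbabilityMeasure P]

lemma integrable_mul_integral (hw : Integrable w ν)
    (hθ : ∀ s, Measurable fun q : Y × Ω => θ q.1 q.2 s) {g : E → ℝ} (hg : Continuous g) (s : ℝ) :
    Integrable (fun y => w y * ∫ ω, g (θ y ω s) ∂P) ν := by
  obtain ⟨C, hC⟩ := exists_norm_le_of_continuous hg
  exact (hw.norm.mul_const C).mono' (aestronglyMeasurable_mul_integral hw hθ hg.measurable s)
    (ae_of_all _ fun y => norm_mul_integral_le hC y s)

lemma continuous_meanFieldForce_left {Γ : E → E → ℝ} (hw : Integrable w ν)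
    (hθ : ∀ s, Measurable fun q : Y × Ω => θ q.1 q.2 s) (hθc : ∀ y ω, Continuous (θ y ω)) {u : E}
    (hΓ : Continuous (Γ u)) : Continuous fun s => meanFieldForce P ν w Γ θ s u := by
  obtain ⟨C, hC⟩ := exists_norm_le_of_continuous hΓ
  exact continuous_of_dominated
    (fun s => aestronglyMeasurable_mul_integral hw hθ hΓ.measurable s)
    (fun s => ae_of_all _ fun y => norm_mul_integral_le hC y s) (hw.norm.mul_const C)
    (ae_of_all _ fun y => continuous_const.mul <|
      continuous_integral_comp_path (g := fun _ => Γ u) (hΓ.comp continuous_snd) (hθc y)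
        fun s => (hθ s).comp measurable_prodMk_left)

end Topological

variable [PseudoMetricSpace E] [CompactSpace E] [MeasurableSpace E] [OpensMeasurableSpace E]
  [IsProbabilityMeasure P] {Γ : E → E → ℝ} {K : NNReal}

lemma lipschitzWith_meanFieldForce (hw : Integrable w ν)
    (hθ : ∀ s, Measurable fun q : Y × Ω => θ q.1 q.2 s)
    (hΓ : ∀ v, LipschitzWith K fun u => Γ u v) (hΓc : ∀ u, Continuous (Γ u)) (s : ℝ) :
    LipschitzWith (K * (∫ y, ‖w y‖ ∂ν).toNNReal) (meanFieldForce P ν w Γ θ s) := by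
  refine LipschitzWith.of_dist_le_mul fun u u' => ?_
  have hdiff : meanFieldForce P ν w Γ θ s u - meanFieldForce P ν w Γ θ s u' =
      ∫ y, w y * ∫ ω, (Γ u (θ y ω s) - Γ u' (θ y ω s)) ∂P ∂ν := by
    rw [meanFieldForce, meanFieldForce, ← integral_sub (integrable_mul_integral hw hθ (hΓc u) s)
      (integrable_mul_integral hw hθ (hΓc u') s)]
    refine integral_congr_ae (ae_of_all _ fun y => ?_)
    have hθy : Measurable fun ω => θ y ω s := (hθ s).comp measurable_prodMk_left
    simp only [← mul_sub]
    rw [integral_sub (integrable_comp_of_continuous (hΓc u) hθy)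
      (integrable_comp_of_continuous (hΓc u') hθy)]
  rw [dist_eq_norm, hdiff, NNReal.coe_mul, Real.coe_toNNReal _ (by positivity), mul_right_comm,
    mul_comm, ← integral_mul_const]
  exact norm_integral_le_of_norm_le (hw.norm.mul_const _) (ae_of_all _ fun y =>
    norm_mul_integral_le (fun v => (hΓ v).dist_le_mul u u') y s)

lemma continuous_meanFieldForce (hw : Integrable w ν)
    (hθ : ∀ s, Measurable fun q : Y × Ω => θ q.1 q.2 s) (hθc : ∀ y ω, Continuous (θ y ω))
    (hΓ : ∀ v, LipschitzWith K fun u => Γ u v) (hΓc : ∀ u, Continuous (Γ u)) :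
    Continuous (Function.uncurry (meanFieldForce P ν w Γ θ)) :=
  continuous_prod_of_continuous_lipschitzWith' _ _
    (fun s => lipschitzWith_meanFieldForce hw hθ hΓ hΓc s)
    fun u => continuous_meanFieldForce_left hw hθ hθc (hΓc u)

end MeanField

section Clamp

variable {α : Type*} {T : ℝ}

/-- The path `γ` on `[0, T]`, extended to the real line by its values at the end points. -/
def clampPath (hT : 0 ≤ T) (γ : ℝ → α) (s : ℝ) : α :=
  γ (projIcc 0 T hT s)

lemma clampPath_of_mem (hT : 0 ≤ T) (γ : ℝ → α) {s : ℝ} (hs : s ∈ Icc 0 T) :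
    clampPath hT γ s = γ s := by
  rw [clampPath, projIcc_of_mem hT hs]

lemma continuous_clampPath [TopologicalSpace α] (hT : 0 ≤ T) {γ : ℝ → α}
    (hγ : ContinuousOn γ (Icc 0 T)) : Continuous (clampPath hT γ) :=
  hγ.comp_continuous (continuous_subtype_val.comp continuous_projIcc) fun s =>
    (projIcc 0 T hT s).2

lemma measurable_clampPath [MeasurableSpace α] (hT : 0 ≤ T) :
    Measurable (clampPath hT : (ℝ → α) → ℝ → α) :=
  measurable_pi_lambda _ fun s => measurable_pi_apply (projIcc 0 T hT s : ℝ)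

lemma isStandardBM_clampPath {Ω : Type*} [MeasurableSpace Ω] {P : Measure Ω} {B : Ω → ℝ → ℝ}
    (hT : 0 ≤ T) (hB : IsStandardBM T P B) :
    IsStandardBM T P fun ω => clampPath hT (B ω) := by
  obtain ⟨hzero, hcont, hmeas, hincr⟩ := hB
  refine ⟨fun ω => ?_, fun ω => (continuous_clampPath hT (hcont ω)).continuousOn,
    fun s => hmeas _, fun s t hs hst htT => ?_⟩
  · exact (clampPath_of_mem hT _ ⟨le_rfl, hT⟩).trans (hzero ω)
  · have hpast : (fun ω (r : Icc 0 s) => clampPath hT (B ω) (r : ℝ)) =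
        fun ω (r : Icc 0 s) => B ω (r : ℝ) := by
      ext ω r
      exact clampPath_of_mem hT _ ⟨r.2.1, r.2.2.trans (hst.trans htT)⟩
    simpa only [clampPath_of_mem hT _ ⟨hs, hst.trans htT⟩,
      clampPath_of_mem hT _ ⟨hs.trans hst, htT⟩, hpast] using hincr s t hs hst htT

end Clamp

section LabeledSystem

variable {Ω : Type*} [MeasurableSpace Ω] {P : Measure Ω} {T : ℝ} {F : Torus → ℝ}
  {Γ : Torus → Torus → ℝ} {W : ℝ → ℝ → ℝ} {θ0 : ℝ → Ω → Torus} {B : ℝ → Ω → ℝ → ℝ}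
  {θ : ℝ → Ω → ℝ → Torus} {x : ℝ}

lemma integral_pathLaw {γ : Ω → ℝ → Torus} {s : ℝ} (hγ : Measurable fun ω => γ ω s)
    {g : Torus → ℝ} (hg : Continuous g) : ∫ u, g u ∂pathLaw P γ s = ∫ ω, g (γ ω s) ∂P :=
  integral_map hγ.aemeasurable hg.aestronglyMeasurable

/-- The drift acting on the particle with label `x`, in the environment of the laws of `θ`; the
paths are clamped to `[0, T]` so that it is continuous in `s` on the whole real line. -/
def labelDrift (hT : 0 ≤ T) (P : Measure Ω) (F : Torus → ℝ) (Γ : Torus → Torus → ℝ)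
    (W : ℝ → ℝ → ℝ) (θ : ℝ → Ω → ℝ → Torus) (x s : ℝ) (u : Torus) : ℝ :=
  F u + meanFieldForce P (volume.restrict I01) (W x) Γ (fun y ω => clampPath hT (θ y ω)) s u

namespace IsLabeledSolution

lemma measurable_path (hθ : IsLabeledSolution T P F Γ W θ0 B θ) (s : ℝ) :
    Measurable fun q : ℝ × Ω => θ q.1 q.2 s :=
  (measurable_pi_apply s).comp hθ.jointMeas

lemma meanFieldForce_clampPath (hθ : IsLabeledSolution T P F Γ W θ0 B θ)
    (hΓc : ∀ u, Continuous (Γ u)) (hT : 0 ≤ T) {s : ℝ} (hs : s ∈ Icc 0 T) (u : Torus) :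
    meanFieldForce P (volume.restrict I01) (W x) Γ (fun y ω => clampPath hT (θ y ω)) s u =
      ∫ y in I01, W x y * ∫ v, Γ u v ∂pathLaw P (θ y) s := by
  have hlaw : ∀ y, ∫ v, Γ u v ∂pathLaw P (θ y) s = ∫ ω, Γ u (θ y ω s) ∂P := fun y =>
    integral_pathLaw ((hθ.measurable_path s).comp measurable_prodMk_left) (hΓc u)
  simp only [meanFieldForce, clampPath_of_mem hT _ hs, hlaw]

variable [IsProbabilityMeasure P] {KF KΓ : NNReal}

lemma lipschitzWith_labelDrift (hθ : IsLabeledSolution T P F Γ W θ0 B θ)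
    (hF : LipschitzWith KF F) (hΓ : ∀ v, LipschitzWith KΓ fun u => Γ u v)
    (hΓc : ∀ u, Continuous (Γ u)) (hW : IntegrableOn (W x) I01) (hT : 0 ≤ T) (s : ℝ) :
    LipschitzWith (KF + KΓ * (∫ y in I01, ‖W x y‖).toNNReal) (labelDrift hT P F Γ W θ x s) :=
  hF.add (lipschitzWith_meanFieldForce (θ := fun y ω => clampPath hT (θ y ω)) hW
    (fun _ => hθ.measurable_path _) hΓ hΓc s)

lemma continuous_meanFieldForce_clampPath (hθ : IsLabeledSolution T P F Γ W θ0 B θ)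
    (hΓ : ∀ v, LipschitzWith KΓ fun u => Γ u v) (hΓc : ∀ u, Continuous (Γ u))
    (hW : IntegrableOn (W x) I01) (hT : 0 ≤ T) :
    Continuous (Function.uncurry (meanFieldForce P (volume.restrict I01) (W x) Γ
      fun y ω => clampPath hT (θ y ω))) :=
  continuous_meanFieldForce hW (fun _ => hθ.measurable_path _)
    (fun y ω => continuous_clampPath hT (hθ.cont y ω)) hΓ hΓc

lemma continuous_labelDrift (hθ : IsLabeledSolution T P F Γ W θ0 B θ)
    (hF : LipschitzWith KF F) (hΓ : ∀ v, LipschitzWith KΓ fun u => Γ u v)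
    (hΓc : ∀ u, Continuous (Γ u)) (hW : IntegrableOn (W x) I01) (hT : 0 ≤ T) :
    Continuous (Function.uncurry (labelDrift hT P F Γ W θ x)) :=
  (hF.continuous.comp continuous_snd).add (hθ.continuous_meanFieldForce_clampPath hΓ hΓc hW hT)

lemma drift_eq_intervalIntegral (hθ : IsLabeledSolution T P F Γ W θ0 B θ)
    (hF : LipschitzWith KF F) (hΓ : ∀ v, LipschitzWith KΓ fun u => Γ u v)
    (hΓc : ∀ u, Continuous (Γ u)) (hW : IntegrableOn (W x) I01) (hT : 0 ≤ T) {γ : ℝ → Torus}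
    (hγ : ContinuousOn γ (Icc 0 T)) {t : ℝ} (ht : t ∈ Icc 0 T) :
    drift F Γ W (fun y s => pathLaw P (θ y) s) x γ t =
      ∫ s in (0 : ℝ)..t, labelDrift hT P F Γ W θ x s (clampPath hT γ s) := by
  have hγc := continuous_clampPath hT hγ
  have hFint : IntervalIntegrable (fun s => F (clampPath hT γ s)) volume 0 t :=
    (hF.continuous.comp hγc).intervalIntegrable 0 t
  have hforce := (continuous_drift_along (hθ.continuous_meanFieldForce_clampPath hΓ hΓc hW hT)
    hγc).intervalIntegrable (μ := volume) 0 t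
  simp only [labelDrift]
  rw [drift, intervalIntegral.integral_add hFint hforce, intervalIntegral.integral_of_le ht.1,
    intervalIntegral.integral_of_le ht.1, ← integral_Icc_eq_integral_Ioc,
    ← integral_Icc_eq_integral_Ioc]
  congr 1 <;> refine setIntegral_congr_fun measurableSet_Icc fun s hs => ?_ <;>
    have hsT : s ∈ Icc 0 T := ⟨hs.1, hs.2.trans ht.2⟩
  · rw [clampPath_of_mem hT γ hsT]
  · rw [clampPath_of_mem hT γ hsT, hθ.meanFieldForce_clampPath hΓc hT hsT]

-- Since `B_0 = 0`, the equation at time `0` says `θ_0 = θ0` almost surely.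
lemma isAdditiveSDESolution_clampPath (hθ : IsLabeledSolution T P F Γ W θ0 B θ)
    (hF : LipschitzWith KF F) (hΓ : ∀ v, LipschitzWith KΓ fun u => Γ u v)
    (hΓc : ∀ u, Continuous (Γ u)) (hW : IntegrableOn (W x) I01) (hT : 0 ≤ T)
    (hB : IsStandardBM T P (B x)) (hindep : IndepFun (θ0 x) (fun ω => B x ω) P)
    (hsde : ∀ᵐ ω ∂P, ∀ t ∈ Icc (0 : ℝ) T, θ x ω t = θ0 x ω +
      ((drift F Γ W (fun y s => pathLaw P (θ y) s) x (θ x ω) t + B x ω t : ℝ) : Torus)) :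
    IsAdditiveSDESolution T P (labelDrift hT P F Γ W θ x) (fun ω => clampPath hT (B x ω))
      fun ω => clampPath hT (θ x ω) := by
  have hzero : (0 : ℝ) ∈ Icc 0 T := ⟨le_rfl, hT⟩
  have hinit : θ0 x =ᵐ[P] fun ω => clampPath hT (θ x ω) 0 := by
    filter_upwards [hsde] with ω hω
    rw [clampPath_of_mem hT _ hzero, hω 0 hzero, hB.1 ω,
      hθ.drift_eq_intervalIntegral hF hΓ hΓc hW hT (hθ.cont x ω) hzero]
    simp
  refine ⟨isStandardBM_clampPath hT hB, ?_, fun ω => continuous_clampPath hT (hB.2.1 ω),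
    fun ω => continuous_clampPath hT (hθ.cont x ω),
    fun s => (hθ.measurable_path _).comp measurable_prodMk_left, ?_⟩
  · exact (hindep.comp measurable_id (measurable_clampPath hT)).congr hinit ae_eq_rfl
  · filter_upwards [hsde, hinit] with ω hω hω0 s hs
    rw [← hω0, clampPath_of_mem hT _ hs, clampPath_of_mem hT _ hs, hω s hs,
      hθ.drift_eq_intervalIntegral hF hΓ hΓc hW hT (hθ.cont x ω) hs]

end IsLabeledSolution

end LabeledSystem


lemma IsGraphon.integrableOn_section {W : ℝ → ℝ → ℝ} (hW : IsGraphon W) (x : ℝ) :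
    IntegrableOn (W x) I01 :=
  Integrable.of_bound (hW.1.comp measurable_prodMk_left).aestronglyMeasurable 1
    (ae_of_all _ fun y => by simpa [abs_of_nonneg (hW.2.1 x y).1] using (hW.2.1 x y).2)

theorem labeled_nonlinear_fokker_planck_general
    {Ω : Type*} [MeasurableSpace Ω] {T : ℝ} {P : Measure Ω} [IsProbabilityMeasure P]
    {F : Torus → ℝ} {Γ : Torus → Torus → ℝ} {KF KΓ : NNReal} (hF : LipschitzWith KF F)
    (hΓ : ∀ v, LipschitzWith KΓ fun u => Γ u v) (hΓc : ∀ u, Continuous (Γ u))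
    {W : ℝ → ℝ → ℝ} (hW : ∀ᵐ x ∂(volume.restrict I01), IntegrableOn (W x) I01)
    {θ0 : ℝ → Ω → Torus} {B : ℝ → Ω → ℝ → ℝ}
    (hBM : ∀ᵐ x ∂(volume.restrict I01), IsStandardBM T P (B x) ∧
      IndepFun (θ0 x) (fun ω => B x ω) P)
    {θ : ℝ → Ω → ℝ → Torus} (hθ : IsLabeledSolution T P F Γ W θ0 B θ) :
    ∀ᵐ x ∂(volume.restrict I01), ∀ f f' f'' : Torus → ℝ, Continuous f'' →
      HasLiftDeriv f f' → HasLiftDeriv f' f'' → ∀ t ∈ Icc (0 : ℝ) T,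
        (∫ u, f u ∂pathLaw P (θ x) t) - ∫ u, f u ∂pathLaw P (θ x) 0 =
          ∫ s in Icc (0 : ℝ) t, ∫ u, (1 / 2 * f'' u + f' u *
            (F u + ∫ y in I01, W x y * ∫ v, Γ u v ∂pathLaw P (θ y) s)) ∂pathLaw P (θ x) s := by
  filter_upwards [hBM, hθ.sde, hW] with x ⟨hB, hindep⟩ hsde hWx f f' f'' hf'' hf hf' t ht
  have hT : 0 ≤ T := ht.1.trans ht.2
  have hzero : (0 : ℝ) ∈ Icc 0 T := ⟨le_rfl, hT⟩
  have hb := hθ.continuous_labelDrift hF hΓ hΓc hWx hT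
  have hpath : ∀ s, Measurable fun ω => θ x ω s := fun s =>
    (hθ.measurable_path s).comp measurable_prodMk_left
  have hFP := (hθ.isAdditiveSDESolution_clampPath hF hΓ hΓc hWx hT hB hindep
    hsde).integral_sub_integral_eq hb (hθ.lipschitzWith_labelDrift hF hΓ hΓc hWx hT)
    hf hf' hf'' ht
  simp only [clampPath_of_mem hT _ ht, clampPath_of_mem hT _ hzero] at hFP
  rw [integral_pathLaw (hpath t) hf.continuous, integral_pathLaw (hpath 0) hf.continuous, hFP,
    intervalIntegral.integral_of_le ht.1, integral_Icc_eq_integral_Ioc]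
  refine setIntegral_congr_fun measurableSet_Ioc fun s hs => ?_
  have hs' : s ∈ Icc 0 T := ⟨hs.1.le, hs.2.trans ht.2⟩
  have hgen : Continuous fun u => 1 / 2 * f'' u + f' u * labelDrift hT P F Γ W θ x s u :=
    (continuous_const.mul hf'').add (hf'.continuous.mul (hb.uncurry_left s))
  simp only [clampPath_of_mem hT _ hs', ← hθ.meanFieldForce_clampPath hΓc hT hs']
  exact (integral_pathLaw (hpath s) hgen).symm

/-- labeled nonlinear Fokker–Planck equation: if `θ` solves the nonlinear
system for `W` where for a.e. `x` the driver `B^x` is a standard Brownian motion independent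
of `θ^x_0`, then for a.e. `x ∈ I` the marginal laws `μ^x_t = Law(θ^x_t)` solve the labeled
nonlinear Fokker–Planck equation weakly: for every `C²` function `f : 𝕋 → ℝ` and every
`t ∈ [0,T]`,
`∫ f dμ^x_t − ∫ f dμ^x_0
  = ∫₀ᵗ ∫ ( ½ f'' + f' · (F + ∫_I W(x,y) ∫ Γ(·,u) μ^y_s(du) dy) ) dμ^x_s ds`. -/
theorem labeled_nonlinear_fokker_planck
    {Ω : Type*} [MeasurableSpace Ω] (T : ℝ) (hT : 0 < T)
    (P : Measure Ω) [IsProbabilityMeasure P]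
    (F : Torus → ℝ) (Γ : Torus → Torus → ℝ) (hF : BddLip F) (hΓ : BddLip2 Γ)
    (W : ℝ → ℝ → ℝ) (hW : IsGraphon W)
    (θ0 : ℝ → Ω → Torus) (hθ0 : Measurable (fun p : ℝ × Ω => θ0 p.1 p.2))
    (B : ℝ → Ω → ℝ → ℝ) (hBmeas : Measurable (fun p : ℝ × Ω => B p.1 p.2))
    (hBM : ∀ᵐ x ∂(volume.restrict I01), IsStandardBM T P (B x) ∧
      ProbabilityTheory.IndepFun (θ0 x) (fun ω => B x ω) P)
    (θ : ℝ → Ω → ℝ → Torus)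
    (hθ : IsLabeledSolution T P F Γ W θ0 B θ) :
    ∀ᵐ x ∂(volume.restrict I01),
      ∀ (f f' f'' : Torus → ℝ), Continuous f'' →
        (∀ r : ℝ, HasDerivAt (fun s : ℝ => f (s : Torus)) (f' (r : Torus)) r) →
        (∀ r : ℝ, HasDerivAt (fun s : ℝ => f' (s : Torus)) (f'' (r : Torus)) r) →
        ∀ t ∈ Set.Icc (0:ℝ) T,
          (∫ u, f u ∂(pathLaw P (θ x) t)) - (∫ u, f u ∂(pathLaw P (θ x) 0)) =
            ∫ s in Set.Icc (0:ℝ) t, ∫ u,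
              ((1/2) * f'' u + f' u *
                (F u + ∫ y in I01, W x y * ∫ v, Γ u v ∂(pathLaw P (θ y) s)))
              ∂(pathLaw P (θ x) s) := by
  obtain ⟨⟨KF, hF⟩, -⟩ := hF
  obtain ⟨⟨KΓ, hΓ⟩, -⟩ := hΓ
  exact labeled_nonlinear_fokker_planck_general hF
    (fun v => mul_one KΓ ▸ hΓ.comp (LipschitzWith.prodMk_right v))
    (fun u => hΓ.continuous.comp (continuous_const.prodMk continuous_id))
    (ae_of_all _ fun x => hW.integrableOn_section x) hBM hθ
end
end
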